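/- Let d ∈ ℕ. There exists a constant C(d) > 0 depending only on d such that for every n ∈ ℕ, every Gaussian random vector X in ℝⁿ, and every non-constant polynomial g on ℝⁿ of total degree at most d, the density ϱ_g of g(X) satisfies σ(ϱ_g, ε) ≤ C(d) [𝔻g(X)]^{−1/(2d)} ε^{1/d} for all ε > 0, where 𝔻g(X) is the variance of g(X). -/

import Mathlib

/-!
The proof works with two independent standard Gaussian vectors `x`, `y` and the rotations
`x_t = cos t • x + sin t • y`, `y_t = -sin t • x + cos t • y` (`rot`), which preserve their joint law.
Along a circle `t ↦ x_t` a polynomial of degree `k` on `ℝⁿ` is a trigonometric polynomial of degree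
at most `k` (`tr_circle`), and its derivative is the derivative of the polynomial at `x_t` in the
direction `y_t`. Elementary one-dimensional facts on a quarter circle, averaged over `x`, `y`
(`lintegral_rot_average`, `integral_rot_average`), therefore give Gaussian inequalities whose
constants depend on the degree only and not on the dimension `n`:

* interpolation at fixed nodes (`trig_nodes`) gives the Poincaré inequality and its converse for
  polynomials (`poincare_scalar`, `rev_poincare_scalar`), and from these follows the reverse Hölder
  inequality `E S² ≤ C (E S)²` for sums of squares `S` (`hyper`);
* a bound for the length of the set of `t` where a vector of trigonometric polynomials is small
  while its derivative is large (`slab`) gives, by induction on the degree, the small ball estimate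
  `P(|F|² < u^{2k} E|F|²) ≤ C u` for vector-valued `F` of degree at most `k` (`small_ball`);
* a van der Corput estimate (`osc`) gives `|E φ'(g) 1{|∇g| ≥ δ}| ≤ C ε / δ` (`large_gradient`).

For `g` of degree `d`, put `τ² = E|∇g|²`, `u = (ε/τ)^{1/d}` and `δ = τ u^{d-1}`, so that `ε / δ = u`.
The part of `E φ'(g)` with `|∇g| ≥ δ` is at most `C u` by the last item. Since `|φ'| ≤ 1` and `∇g`
has degree at most `d - 1`, the remaining part is at most `P(|∇g| < τ u^{d-1}) ≤ C u`. Hence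
`|E φ'(g)| ≤ C (ε/τ)^{1/d}` (`main_gam`), and `τ²` is bounded below by a multiple of the variance by
the Poincaré inequality. The same bound, applied to primitives of cut-off functions of small
neighbourhoods of null sets, shows that the law of `g` has a density (`exists_density`). A general
Gaussian vector reduces to a standard one by an affine substitution in `g`
(`exists_affine_subst`).
-/

open MeasureTheory ProbabilityTheory

/-- The modulus `σ(ϱ, ε) = sup { ∫ φ' ϱ : φ ∈ C₀^∞(ℝ), ‖φ‖_∞ ≤ ε, ‖φ'‖_∞ ≤ 1 }`. -/
noncomputable def sigmaMod (ρ : ℝ → ℝ) (ε : ℝ) : ℝ :=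
  sSup {r : ℝ | ∃ φ : ℝ → ℝ, ContDiff ℝ (⊤ : ℕ∞) φ ∧ HasCompactSupport φ ∧
    (∀ x, |φ x| ≤ ε) ∧ (∀ x, |deriv φ x| ≤ 1) ∧ r = ∫ s : ℝ, deriv φ s * ρ s}

/-- The standard Gaussian measure on `ℝⁿ` (i.i.d. `N(0,1)` coordinates). -/
noncomputable def stdGaussian (n : ℕ) : Measure (Fin n → ℝ) :=
  Measure.pi fun _ => gaussianReal 0 1

/-- A (possibly degenerate) Gaussian distribution on `ℝⁿ`: the image of the standard
Gaussian measure under an affine map. -/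
def IsGaussianVec {n : ℕ} (μ : Measure (Fin n → ℝ)) : Prop :=
  ∃ (L : (Fin n → ℝ) →ₗ[ℝ] (Fin n → ℝ)) (b : Fin n → ℝ),
    μ = (stdGaussian n).map (fun x => b + L x)

/-! ### Trigonometric polynomials in the half-angle variable -/

namespace GaussPoly
open Set

/-- `q` is a trigonometric polynomial on the open circle `(-π, π)`, written in the half-angle variable
`tan (t / 2)`: there `q t = cos (t / 2) ^ (2 * K) * R (tan (t / 2))` with `R` of degree at most `M`.
Trigonometric polynomials of degree at most `K` satisfy this with `M = 2 * K`; recording `M`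
separately leaves room for products and for derivatives (see `Tr.deriv`). -/
def Tr (K M : ℕ) (q : ℝ → ℝ) : Prop :=
  ∃ R : Polynomial ℝ, R.natDegree ≤ M ∧
    ∀ t ∈ Ioo (-Real.pi) Real.pi,
      q t = Real.cos (t / 2) ^ (2 * K) * R.eval (Real.tan (t / 2))

lemma cos_half_pos {t : ℝ} (ht : t ∈ Ioo (-Real.pi) Real.pi) : 0 < Real.cos (t / 2) :=
  Real.cos_pos_of_mem_Ioo ⟨by linarith [ht.1], by linarith [ht.2]⟩

lemma cos_sq_tan {t : ℝ} (ht : t ∈ Ioo (-Real.pi) Real.pi) :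
    Real.cos (t / 2) ^ 2 * (1 + Real.tan (t / 2) ^ 2) = 1 := by
  have h := (cos_half_pos ht).ne'
  rw [Real.tan_eq_sin_div_cos]
  field_simp
  linarith [Real.sin_sq_add_cos_sq (t / 2)]

lemma Tr.congr {K M : ℕ} {q r : ℝ → ℝ} (h : Tr K M q)
    (e : ∀ t ∈ Ioo (-Real.pi) Real.pi, r t = q t) : Tr K M r := by
  obtain ⟨R, hR, h⟩ := h
  exact ⟨R, hR, fun t ht => (e t ht).trans (h t ht)⟩

lemma Tr.mono {K M M' : ℕ} {q : ℝ → ℝ} (h : Tr K M q) (hM : M ≤ M') : Tr K M' q := by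
  obtain ⟨R, hR, h⟩ := h
  exact ⟨R, hR.trans hM, h⟩

lemma Tr.add {K M : ℕ} {q r : ℝ → ℝ} (h : Tr K M q) (h' : Tr K M r) :
    Tr K M (fun t => q t + r t) := by
  obtain ⟨R, hR, h⟩ := h
  obtain ⟨R', hR', h'⟩ := h'
  refine ⟨R + R', Polynomial.natDegree_add_le_of_degree_le hR hR', fun t ht => ?_⟩
  simp only [h t ht, h' t ht, Polynomial.eval_add]; ring

lemma Tr.const_mul {K M : ℕ} {q : ℝ → ℝ} (h : Tr K M q) (c : ℝ) :
    Tr K M (fun t => c * q t) := by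
  obtain ⟨R, hR, h⟩ := h
  refine ⟨Polynomial.C c * R, (Polynomial.natDegree_C_mul_le c R).trans hR, fun t ht => ?_⟩
  simp only [h t ht, Polynomial.eval_mul, Polynomial.eval_C]; ring

lemma Tr.zero (K M : ℕ) : Tr K M (fun _ => 0) := ⟨0, by simp, by simp⟩

lemma Tr.sum {K M : ℕ} {ι : Type*} (s : Finset ι) {q : ι → ℝ → ℝ}
    (h : ∀ i ∈ s, Tr K M (q i)) : Tr K M (fun t => ∑ i ∈ s, q i t) := by
  classical
  induction s using Finset.induction_on with
  | empty => simpa using Tr.zero K M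
  | insert i s hi ih =>
    simp only [Finset.sum_insert hi]
    exact (h i (Finset.mem_insert_self i s)).add
      (ih fun j hj => h j (Finset.mem_insert_of_mem hj))

lemma Tr.mul {K M K' M' : ℕ} {q r : ℝ → ℝ} (h : Tr K M q) (h' : Tr K' M' r) :
    Tr (K + K') (M + M') (fun t => q t * r t) := by
  obtain ⟨R, hR, h⟩ := h
  obtain ⟨R', hR', h'⟩ := h'
  refine ⟨R * R', Polynomial.natDegree_mul_le_of_le hR hR', fun t ht => ?_⟩
  simp only [h t ht, h' t ht, Polynomial.eval_mul]; ring

lemma Tr.one : Tr 0 0 (fun _ => 1) := ⟨1, by simp, by simp⟩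

/-- The degree `K` can be raised, since `cos (t / 2) ^ 2 * (1 + tan (t / 2) ^ 2) = 1`. -/
lemma Tr.lift {K M : ℕ} {q : ℝ → ℝ} (h : Tr K M q) (j : ℕ) : Tr (K + j) (M + 2 * j) q := by
  induction j with
  | zero => simpa using h
  | succ j ih =>
    obtain ⟨R, hR, h⟩ := ih
    refine ⟨R * (1 + Polynomial.X ^ 2), ?_, fun t ht => ?_⟩
    · refine (Polynomial.natDegree_mul_le_of_le hR (n := 2) ?_).trans (by omega)
      compute_degree
    · rw [h t ht]
      have := cos_sq_tan ht
      simp only [Polynomial.eval_mul, Polynomial.eval_add, Polynomial.eval_one,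
        Polynomial.eval_pow, Polynomial.eval_X]
      calc _ = Real.cos (t / 2) ^ (2 * (K + j)) * R.eval (Real.tan (t / 2)) *
            (Real.cos (t / 2) ^ 2 * (1 + Real.tan (t / 2) ^ 2)) := by rw [this, mul_one]
        _ = _ := by ring

lemma Tr.const (K : ℕ) (c : ℝ) : Tr K (2 * K) (fun _ => c) := by
  have := (Tr.one.lift K).const_mul c
  simpa using this

lemma Tr.cos_sin (a b : ℝ) : Tr 1 2 (fun t => Real.cos t * a + Real.sin t * b) := by
  refine ⟨Polynomial.C a * (1 - Polynomial.X ^ 2) + Polynomial.C (2 * b) * Polynomial.X,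
    by compute_degree, fun t ht => ?_⟩
  have h := (cos_half_pos ht).ne'
  have e1 : Real.cos t = 2 * Real.cos (t / 2) ^ 2 - 1 := by
    rw [← Real.cos_two_mul]; ring_nf
  have e2 : Real.sin t = 2 * Real.sin (t / 2) * Real.cos (t / 2) := by
    rw [← Real.sin_two_mul]; ring_nf
  have e3 := Real.sin_sq_add_cos_sq (t / 2)
  simp only [Polynomial.eval_mul, Polynomial.eval_add, Polynomial.eval_sub, Polynomial.eval_one,
        Polynomial.eval_pow, Polynomial.eval_X, Polynomial.eval_C]
  rw [e1, e2, Real.tan_eq_sin_div_cos]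
  field_simp
  have e4 : Real.sin (t / 2) ^ 2 = 1 - Real.cos (t / 2) ^ 2 := by linarith
  rw [e4]; ring

lemma Tr.pow {K M : ℕ} {q : ℝ → ℝ} (h : Tr K M q) (j : ℕ) :
    Tr (j * K) (j * M) (fun t => q t ^ j) := by
  induction j with
  | zero => simpa using Tr.one
  | succ j ih =>
    simp only [pow_succ]
    have := ih.mul h
    rwa [← Nat.succ_mul, ← Nat.succ_mul] at this

/-- The derivative formula in the half-angle variable. -/
lemma hasDerivAt_trig {K : ℕ} {R : Polynomial ℝ} {q : ℝ → ℝ}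
    (h : ∀ t ∈ Ioo (-Real.pi) Real.pi,
      q t = Real.cos (t / 2) ^ (2 * K) * R.eval (Real.tan (t / 2)))
    {t : ℝ} (ht : t ∈ Ioo (-Real.pi) Real.pi) :
    HasDerivAt q (Real.cos (t / 2) ^ (2 * K) *
      (-(K : ℝ) * Real.tan (t / 2) * R.eval (Real.tan (t / 2)) +
        R.derivative.eval (Real.tan (t / 2)) * (1 + Real.tan (t / 2) ^ 2) / 2)) t := by
  have hc := (cos_half_pos ht).ne'
  have h1 : HasDerivAt (fun t : ℝ => t / 2) (1 / 2) t := (hasDerivAt_id t).div_const 2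
  have h2 : HasDerivAt (fun t => Real.cos (t / 2)) (-Real.sin (t / 2) * (1 / 2)) t := h1.cos
  have h3 : HasDerivAt (fun t => Real.tan (t / 2)) (1 / Real.cos (t / 2) ^ 2 * (1 / 2)) t :=
    HasDerivAt.comp (h₂ := Real.tan) t (Real.hasDerivAt_tan hc) h1
  have h4 : HasDerivAt (fun t => R.eval (Real.tan (t / 2)))
      (R.derivative.eval (Real.tan (t / 2)) * (1 / Real.cos (t / 2) ^ 2 * (1 / 2))) t :=
    HasDerivAt.comp (h₂ := fun u => R.eval u) t (R.hasDerivAt (Real.tan (t / 2))) h3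
  have h5 := (h2.pow (2 * K)).mul h4
  have h6 := h5.congr_of_eventuallyEq (f₁ := q)
    (Filter.eventuallyEq_of_mem (isOpen_Ioo.mem_nhds ht) h)
  refine h6.congr_deriv ?_
  have e3 := cos_sq_tan ht
  have e4 : 1 / Real.cos (t / 2) ^ 2 = 1 + Real.tan (t / 2) ^ 2 := by
    field_simp; linarith
  rw [e4]
  rcases Nat.eq_zero_or_pos K with rfl | hK
  · simp; ring
  · have e5 : Real.cos (t / 2) ^ (2 * K) =
        Real.cos (t / 2) ^ (2 * K - 1) * Real.cos (t / 2) := by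
      rw [← pow_succ]; congr 1; omega
    have e6 : Real.sin (t / 2) = Real.tan (t / 2) * Real.cos (t / 2) :=
      (Real.tan_mul_cos hc).symm
    simp only [Pi.pow_apply]
    rw [e6, e5]; push_cast; ring

lemma Tr.deriv {K M : ℕ} {q q' : ℝ → ℝ} (h : Tr K M q)
    (hq : ∀ t, HasDerivAt q (q' t) t) : Tr K (M + 1) q' := by
  obtain ⟨R, hR, h⟩ := h
  refine ⟨Polynomial.C (-(K : ℝ)) * Polynomial.X * R +
    R.derivative * ((1 + Polynomial.X ^ 2) * Polynomial.C (1 / 2)), ?_, fun t ht => ?_⟩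
  · refine Polynomial.natDegree_add_le_of_degree_le ?_ ?_
    · refine (Polynomial.natDegree_mul_le_of_le (m := 1) ?_ hR).trans (by omega)
      compute_degree
    · by_cases h0 : M = 0
      · have : R.derivative = 0 := Polynomial.derivative_of_natDegree_zero (by omega)
        simp [this]
      · refine (Polynomial.natDegree_mul_le_of_le (m := M - 1) (n := 2) ?_ ?_).trans (by omega)
        · exact (Polynomial.natDegree_derivative_le R).trans (by omega)
        · compute_degree
  · rw [(hq t).unique (hasDerivAt_trig h ht)]
    simp only [Polynomial.eval_mul, Polynomial.eval_add, Polynomial.eval_one,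
        Polynomial.eval_pow, Polynomial.eval_X, Polynomial.eval_C]
    ring

/-- A trigonometric polynomial either vanishes identically on `(-π, π)` or has at most `M` zeros
there, namely those coming from the roots of `R`. -/
lemma Tr.zeros {K M : ℕ} {q : ℝ → ℝ} (h : Tr K M q) :
    ∃ Z : Finset ℝ, Z.card ≤ M ∧ ((∀ t ∈ Ioo (-Real.pi) Real.pi, q t = 0) ∨
      ∀ t ∈ Ioo (-Real.pi) Real.pi, q t = 0 → t ∈ Z) := by
  classical
  obtain ⟨R, hR, h⟩ := h
  refine ⟨R.roots.toFinset.image (fun u => 2 * Real.arctan u), ?_, ?_⟩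
  · exact Finset.card_image_le.trans ((Multiset.toFinset_card_le _).trans
      ((Polynomial.card_roots' R).trans hR))
  · by_cases h0 : R = 0
    · left; intro t ht; rw [h t ht, h0]; simp
    · right; intro t ht hz
      rw [h t ht] at hz
      have hz' := (mul_eq_zero.1 hz).resolve_left (pow_ne_zero _ (cos_half_pos ht).ne')
      refine Finset.mem_image.2 ⟨Real.tan (t / 2), ?_, ?_⟩
      · simpa [h0] using hz'
      · rw [Real.arctan_tan] <;> linarith [ht.1, ht.2]

/-- Interpolation: values on `[0,1]` and the derivative at `0` are controlled by values at
finitely many fixed nodes. -/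
lemma poly_nodes (M : ℕ) : ∃ C : ℝ, 0 < C ∧ ∃ v : Fin (M + 1) → ℝ, (∀ j, v j ∈ Icc (0 : ℝ) 1) ∧
    ∀ R : Polynomial ℝ, R.natDegree ≤ M →
      (∀ u ∈ Icc (0 : ℝ) 1, |R.eval u| ≤ C * ∑ j, |R.eval (v j)|) ∧
      |R.derivative.eval 0| ≤ C * ∑ j, |R.eval (v j)| := by
  classical
  let v : Fin (M + 1) → ℝ := fun j => (j : ℝ) / (M + 1)
  have hv : Function.Injective v := by
    intro i j hij
    have : (M : ℝ) + 1 ≠ 0 := by positivity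
    simp only [v] at hij
    field_simp at hij
    exact Fin.ext (by exact_mod_cast hij)
  let B : Fin (M + 1) → Polynomial ℝ := fun j => Lagrange.basis Finset.univ v j
  have hb : ∀ j, ∃ c : ℝ, ∀ u ∈ Icc (0 : ℝ) 1, |(B j).eval u| ≤ c := fun j => by
    obtain ⟨c, hc⟩ := isCompact_Icc.exists_bound_of_continuousOn (s := Icc (0 : ℝ) 1)
      ((B j).continuous.continuousOn)
    exact ⟨c, fun u hu => by simpa using hc u hu⟩
  choose c hc using hb
  let C : ℝ := 1 + ∑ j, (|c j| + |(B j).derivative.eval 0|)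
  have hCj : ∀ j, |c j| + |(B j).derivative.eval 0| ≤ C := fun j => by
    have := Finset.single_le_sum (f := fun j => |c j| + |(B j).derivative.eval 0|)
      (fun i _ => by positivity) (Finset.mem_univ j)
    simp only [C]; linarith
  refine ⟨C, by positivity, v, fun j => ⟨by positivity, ?_⟩, fun R hR => ?_⟩
  · have := j.2
    rw [div_le_one (by positivity)]
    have : (j : ℝ) < M + 1 := by exact_mod_cast this
    linarith
  have hRB : R = ∑ j, Polynomial.C (R.eval (v j)) * B j := by
    have := Lagrange.eq_interpolate (s := Finset.univ) (f := R) hv.injOn (by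
      refine Polynomial.degree_le_natDegree.trans_lt ?_
      simp only [Finset.card_univ, Fintype.card_fin]
      exact_mod_cast Nat.lt_succ_of_le hR)
    rw [Lagrange.interpolate_apply] at this
    exact this
  constructor
  · intro u hu
    have : R.eval u = ∑ j, R.eval (v j) * (B j).eval u := by
      conv_lhs => rw [hRB]
      simp [Polynomial.eval_finsetSum]
    rw [this, Finset.mul_sum]
    refine (Finset.abs_sum_le_sum_abs _ _).trans (Finset.sum_le_sum fun j _ => ?_)
    rw [abs_mul, mul_comm]
    gcongr
    have := hCj j
    have := le_abs_self (c j)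
    have := hc j u hu
    have := abs_nonneg ((B j).derivative.eval 0)
    linarith
  · have : R.derivative.eval 0 = ∑ j, R.eval (v j) * (B j).derivative.eval 0 := by
      conv_lhs => rw [hRB]
      simp [Polynomial.eval_finsetSum]
    rw [this, Finset.mul_sum]
    refine (Finset.abs_sum_le_sum_abs _ _).trans (Finset.sum_le_sum fun j _ => ?_)
    rw [abs_mul, mul_comm]
    gcongr
    have := hCj j
    have := abs_nonneg (c j)
    linarith

lemma arctan_lip (u v : ℝ) : |Real.arctan u - Real.arctan v| ≤ |u - v| := by
  have h := Convex.norm_image_sub_le_of_norm_hasDerivWithin_le (f := Real.arctan)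
    (f' := fun x => 1 / (1 + x ^ 2)) (s := univ) (x := v) (y := u) (C := 1)
    (fun x _ => (Real.hasDerivAt_arctan x).hasDerivWithinAt) (fun x _ => by
      rw [Real.norm_eq_abs, abs_of_pos (by positivity), div_le_one (by positivity)]
      nlinarith [sq_nonneg x]) convex_univ (mem_univ _) (mem_univ _)
  simpa using h

lemma two_arctan_mem (u : ℝ) : 2 * Real.arctan u ∈ Ioo (-Real.pi) Real.pi :=
  ⟨by linarith [Real.neg_pi_div_two_lt_arctan u], by linarith [Real.arctan_lt_pi_div_two u]⟩

/-- The polynomial `R` of the half-angle representation, recovered from the values of `q`. -/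
lemma trig_at {K : ℕ} {R : Polynomial ℝ} {q : ℝ → ℝ}
    (h : ∀ t ∈ Ioo (-Real.pi) Real.pi,
      q t = Real.cos (t / 2) ^ (2 * K) * R.eval (Real.tan (t / 2))) (u : ℝ) :
    R.eval u = (1 + u ^ 2) ^ K * q (2 * Real.arctan u) := by
  rw [h _ (two_arctan_mem u)]
  have e : 2 * Real.arctan u / 2 = Real.arctan u := by ring
  rw [e, Real.tan_arctan, pow_mul, Real.cos_sq_arctan, ← mul_assoc, ← mul_pow,
    mul_one_div_cancel (by positivity), one_pow, one_mul]

/-- On the quarter circle `[0, π / 2]` a trigonometric polynomial, and its derivative at `0`, are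
controlled by the values at finitely many nodes that depend on the degrees only. This is
`poly_nodes` in the variable `tan (t / 2) ∈ [0, 1]`. -/
lemma trig_nodes (K M : ℕ) : ∃ C : ℝ, 0 < C ∧ ∃ m : ℕ, 0 < m ∧ ∃ s : Fin m → ℝ,
    (∀ j, s j ∈ Icc (0 : ℝ) (Real.pi / 2)) ∧
    ∀ q : ℝ → ℝ, Tr K M q →
      (∀ t ∈ Icc (0 : ℝ) (Real.pi / 2), |q t| ≤ C * ∑ j, |q (s j)|) ∧
      ∀ q0, HasDerivAt q q0 0 → |q0| ≤ C * ∑ j, |q (s j)| := by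
  obtain ⟨C, hC, v, hv, H⟩ := poly_nodes M
  have hpi := Real.pi_pos
  refine ⟨C * 2 ^ K, by positivity, M + 1, M.succ_pos, fun j => 2 * Real.arctan (v j), fun j => ⟨?_, ?_⟩, ?_⟩
  · have := Real.arctan_nonneg.2 (hv j).1; linarith
  · have : Real.arctan (v j) ≤ Real.pi / 4 := by
      rw [← Real.arctan_one]; exact Real.arctan_strictMono.monotone (hv j).2
    linarith
  rintro q ⟨R, hR, h⟩
  obtain ⟨H1, H2⟩ := H R hR
  have key : ∑ j, |R.eval (v j)| ≤ 2 ^ K * ∑ j, |q (2 * Real.arctan (v j))| := by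
    rw [Finset.mul_sum]
    refine Finset.sum_le_sum fun j _ => ?_
    rw [trig_at h, abs_mul, abs_of_pos (by positivity)]
    gcongr
    nlinarith [(hv j).1, (hv j).2]
  constructor
  · intro t ht
    have ht' : t ∈ Ioo (-Real.pi) Real.pi := ⟨by linarith [ht.1], by linarith [ht.2]⟩
    have hu : Real.tan (t / 2) ∈ Icc (0 : ℝ) 1 := by
      constructor
      · exact Real.tan_nonneg_of_nonneg_of_le_pi_div_two (by linarith [ht.1]) (by linarith [ht.2])
      · rw [← Real.tan_pi_div_four]
        exact Real.strictMonoOn_tan.monotoneOn ⟨by linarith [ht.1], by linarith [ht.2]⟩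
          ⟨by linarith, by linarith⟩ (by linarith [ht.2])
    rw [h t ht', abs_mul, mul_assoc]
    calc _ ≤ 1 * |R.eval (Real.tan (t / 2))| := by
          gcongr
          rw [abs_pow]
          exact pow_le_one₀ (abs_nonneg _) (Real.abs_cos_le_one _)
      _ ≤ C * ∑ j, |R.eval (v j)| := by rw [one_mul]; exact H1 _ hu
      _ ≤ _ := by gcongr
  · intro q0 hq0
    have h0 : (0 : ℝ) ∈ Ioo (-Real.pi) Real.pi := ⟨by linarith, hpi⟩
    have := hq0.unique (hasDerivAt_trig h h0)
    simp at this
    rw [this, mul_assoc, abs_div, abs_two]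
    have h3 : 0 ≤ |R.derivative.eval 0| := abs_nonneg _
    calc _ ≤ |R.derivative.eval 0| := by linarith
      _ ≤ C * ∑ j, |R.eval (v j)| := H2
      _ ≤ _ := by gcongr

/-- Local Bernstein inequality: if `|q| ≤ s` on `[t - r, t + r]` with `r ≤ 1`, then
`|q'(t)| ≤ C s / r`. It follows from `poly_nodes` applied to the polynomial `R` rescaled to an
interval of length `r / 2` that starts at `tan (t / 2)`. -/
lemma trig_bernstein (K M : ℕ) : ∃ C : ℝ, 0 < C ∧ ∀ (q : ℝ → ℝ), Tr K M q →
    ∀ t ∈ Icc (0 : ℝ) (Real.pi / 2), ∀ q0, HasDerivAt q q0 t → ∀ r s : ℝ, 0 < r → r ≤ 1 →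
      (∀ τ ∈ Icc (t - r) (t + r), |q τ| ≤ s) → |q0| ≤ C * s / r := by
  obtain ⟨C, hC, v, hv, H⟩ := poly_nodes M
  have hpi := Real.pi_gt_three
  refine ⟨K * 4 ^ K + 2 * (C * ((M + 1) * 4 ^ K)), by positivity, ?_⟩
  rintro q ⟨R, hR, h⟩ t ht q0 hq0 r s hr hr1 hs
  have ht' : t ∈ Ioo (-Real.pi) Real.pi := ⟨by linarith [ht.1], by linarith [ht.2]⟩
  set u := Real.tan (t / 2) with hu_def
  have hu : u ∈ Icc (0 : ℝ) 1 := by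
    constructor
    · exact Real.tan_nonneg_of_nonneg_of_le_pi_div_two (by linarith [ht.1]) (by linarith [ht.2])
    · rw [← Real.tan_pi_div_four]
      exact Real.strictMonoOn_tan.monotoneOn ⟨by linarith [ht.1], by linarith [ht.2]⟩
        ⟨by linarith, by linarith⟩ (by linarith [ht.2])
  have hat : 2 * Real.arctan u = t := by
    rw [hu_def, Real.arctan_tan] <;> linarith [ht'.1, ht'.2]
  have hs0 : 0 ≤ s := (abs_nonneg _).trans (hs t ⟨by linarith, by linarith⟩)
  have hRb : ∀ x ∈ Icc (0 : ℝ) 1, |R.eval (u + r / 2 * x)| ≤ 4 ^ K * s := by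
    intro x hx
    rw [trig_at h, abs_mul, abs_of_pos (by positivity)]
    have hl := arctan_lip (u + r / 2 * x) u
    have hl2 : |u + r / 2 * x - u| ≤ r / 2 := by
      rw [add_sub_cancel_left, abs_of_nonneg (by nlinarith [hx.1])]
      nlinarith [hx.2]
    have hl3 := abs_le.1 (hl.trans hl2)
    gcongr
    · nlinarith [hu.1, hu.2, hx.1, hx.2, mul_nonneg hr.le hx.1, mul_le_one₀ hr1 hx.1 hx.2]
    · exact hs _ ⟨by linarith [hl3.1], by linarith [hl3.2]⟩
  -- `R` on `[u, u + r / 2]`, rescaled to `[0, 1]`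
  let Q : Polynomial ℝ := R.comp (Polynomial.C u + Polynomial.C (r / 2) * Polynomial.X)
  have hQ : Q.natDegree ≤ M := by
    refine Polynomial.natDegree_comp_le.trans ?_
    have : (Polynomial.C u + Polynomial.C (r / 2) * Polynomial.X).natDegree ≤ 1 := by
      compute_degree
    calc _ ≤ R.natDegree * 1 := by gcongr
      _ ≤ M := by omega
  have hQe : ∀ x, Q.eval x = R.eval (u + r / 2 * x) := fun x => by simp [Q]
  have hQ' : Q.derivative.eval 0 = r / 2 * R.derivative.eval u := by
    simp [Q, Polynomial.derivative_comp]
  have hR' : |R.derivative.eval u| ≤ 2 / r * (C * ((M + 1) * (4 ^ K * s))) := by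
    have h1 := (H Q hQ).2
    have h2 : ∑ j, |Q.eval (v j)| ≤ (M + 1) * (4 ^ K * s) := by
      calc _ ≤ ∑ j : Fin (M + 1), 4 ^ K * s :=
            Finset.sum_le_sum fun j _ => by rw [hQe]; exact hRb _ (hv j)
        _ = _ := by simp
    rw [hQ', abs_mul, abs_of_pos (by positivity)] at h1
    have h3 : r / 2 * |R.derivative.eval u| ≤ C * ((M + 1) * (4 ^ K * s)) :=
      h1.trans (by gcongr)
    calc _ = 2 / r * (r / 2 * |R.derivative.eval u|) := by field_simp
      _ ≤ _ := by gcongr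
  have hR0 : |R.eval u| ≤ 4 ^ K * s := by simpa using hRb 0 (by simp)
  rw [hq0.unique (hasDerivAt_trig h ht'), abs_mul, ← hu_def]
  have hcos : |Real.cos (t / 2) ^ (2 * K)| ≤ 1 := by
    rw [abs_pow]
    exact pow_le_one₀ (abs_nonneg _) (Real.abs_cos_le_one _)
  have hmain : |-(K : ℝ) * u * R.eval u + R.derivative.eval u * (1 + u ^ 2) / 2| ≤
      K * (4 ^ K * s) + 2 / r * (C * ((M + 1) * (4 ^ K * s))) := by
    refine (abs_add_le _ _).trans (add_le_add ?_ ?_)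
    · rw [abs_mul, abs_mul, abs_neg, Nat.abs_cast, abs_of_nonneg hu.1]
      calc (K : ℝ) * u * |R.eval u| ≤ K * 1 * (4 ^ K * s) := by
            gcongr; exact hu.2
        _ = _ := by ring
    · rw [abs_div, abs_mul, abs_two, abs_of_pos (by positivity : 0 < 1 + u ^ 2)]
      calc _ ≤ |R.derivative.eval u| * (1 + 1 ^ 2) / 2 := by
            gcongr
            · exact hu.1
            · exact hu.2
        _ = |R.derivative.eval u| := by ring
        _ ≤ _ := hR'
  calc _ ≤ 1 * (K * (4 ^ K * s) + 2 / r * (C * ((M + 1) * (4 ^ K * s)))) := by gcongr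
    _ ≤ K * (4 ^ K * s) / r + 2 / r * (C * ((M + 1) * (4 ^ K * s))) := by
        rw [one_mul]
        gcongr
        rw [le_div_iff₀ hr]
        exact mul_le_of_le_one_right (by positivity) hr1
    _ = _ := by ring

end GaussPoly

/-! ### Slab and oscillation estimates on a quarter circle -/

namespace GaussPoly
open Set

/-- The set of `t` where `∑ q_i²` is below `s²` while `∑ q_i'²` is at least `δ²` has length
`O(s / δ)`, uniformly in the number of the `q_i`. If `∑ q_i²` stayed below `s²` on the whole interval
`[t - r, t + r]` with `r = 2 B s / δ`, the local Bernstein inequality for the single trigonometric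
polynomial `∑ q_i'(t) q_i` would contradict the lower bound on `∑ q_i'(t)²`. So every such `t` lies
within `r` of one of the at most `4 k` zeros of `∑ q_i² - s²`. -/
lemma slab (k : ℕ) : ∃ C : ℝ, 0 < C ∧ ∀ (ι : Type) [Fintype ι] (q q' : ι → ℝ → ℝ),
    (∀ i, Tr k (2 * k) (q i)) → (∀ i t, HasDerivAt (q i) (q' i t) t) →
    ∀ s δ : ℝ, 0 ≤ s → 0 < δ →
      volume {t ∈ Icc (0 : ℝ) (Real.pi / 2) | ∑ i, q i t ^ 2 < s ^ 2 ∧ δ ^ 2 ≤ ∑ i, q' i t ^ 2}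
        ≤ ENNReal.ofReal (C * (s / δ)) := by
  obtain ⟨B, hB, HB⟩ := trig_bernstein k (2 * k)
  refine ⟨(4 * k + 1) * (4 * B), by positivity, ?_⟩
  intro ι _ q q' hq hd s δ hs hδ
  have hpi := Real.pi_gt_three
  have hpi4 := Real.pi_lt_four
  rcases hs.eq_or_lt with rfl | hs
  · have : {t ∈ Icc (0 : ℝ) (Real.pi / 2) | ∑ i, q i t ^ 2 < (0:ℝ) ^ 2 ∧ δ ^ 2 ≤ ∑ i, q' i t ^ 2}
        = ∅ := by
      ext t
      simp only [mem_ofPred_eq, mem_empty_iff_false, iff_false, not_and]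
      intro _ h
      have : 0 ≤ ∑ i, q i t ^ 2 := Finset.sum_nonneg fun i _ => sq_nonneg _
      norm_num at h
      linarith
    rw [this]; simp
  set r := 2 * B * (s / δ) with hr_def
  have hr : 0 < r := by positivity
  -- for `r > 1`, where the Bernstein inequality is not available, the claimed bound is trivial
  by_cases hr1 : 1 < r
  · calc _ ≤ volume (Icc (0 : ℝ) (Real.pi / 2)) := measure_mono fun t ht => ht.1
      _ = ENNReal.ofReal (Real.pi / 2) := by simp
      _ ≤ _ := by
        apply ENNReal.ofReal_le_ofReal
        have h1 : (4 * (k : ℝ) + 1) * (4 * B) * (s / δ) = (4 * k + 1) * (2 * r) := by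
          rw [hr_def]; ring
        rw [h1]
        have : (0 : ℝ) ≤ k := k.cast_nonneg
        nlinarith
  push Not at hr1
  have hN : Tr (k + k) (2 * k + 2 * k) (fun t => ∑ i, q i t ^ 2 + -(s ^ 2)) := by
    refine Tr.add (Tr.sum _ fun i _ => ?_) ?_
    · simpa only [sq] using (hq i).mul (hq i)
    · have := Tr.const (k + k) (-(s ^ 2))
      rwa [mul_add] at this
  obtain ⟨Z, hZ, hZ'⟩ := hN.zeros
  have hcont : Continuous fun t => ∑ i, q i t ^ 2 :=
    continuous_finsetSum _ fun i _ =>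
      (continuous_iff_continuousAt.2 fun t => (hd i t).continuousAt).pow 2
  have hsub : {t ∈ Icc (0 : ℝ) (Real.pi / 2) |
      ∑ i, q i t ^ 2 < s ^ 2 ∧ δ ^ 2 ≤ ∑ i, q' i t ^ 2} ⊆ ⋃ z ∈ Z, Icc (z - r) (z + r) := by
    rintro t ⟨ht, h1, h2⟩
    have : ∃ τ ∈ Icc (t - r) (t + r), s ^ 2 ≤ ∑ i, q i τ ^ 2 := by
      by_contra! hcon
      set D := Real.sqrt (∑ i, q' i t ^ 2) with hD
      have hD2 : D ^ 2 = ∑ i, q' i t ^ 2 :=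
        Real.sq_sqrt (Finset.sum_nonneg fun i _ => sq_nonneg _)
      have hDδ : δ ≤ D := Real.le_sqrt_of_sq_le h2
      -- Bernstein for the fixed combination `∑ q_i'(t) q_i`, bounded by Cauchy–Schwarz
      have hp : Tr k (2 * k) (fun τ => ∑ i, q' i t * q i τ) :=
        Tr.sum _ fun i _ => (hq i).const_mul _
      have hpd : HasDerivAt (fun τ => ∑ i, q' i t * q i τ) (D ^ 2) t := by
        rw [hD2]
        have := HasDerivAt.fun_sum (u := Finset.univ) fun i _ => (hd i t).const_mul (q' i t)
        simpa only [sq] using this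
      have hbd : ∀ τ ∈ Icc (t - r) (t + r), |∑ i, q' i t * q i τ| ≤ D * s := by
        intro τ hτ
        apply abs_le_of_sq_le_sq _ (by positivity)
        calc _ ≤ (∑ i, q' i t ^ 2) * ∑ i, q i τ ^ 2 := Finset.sum_mul_sq_le_sq_mul_sq _ _ _
          _ ≤ D ^ 2 * s ^ 2 := by rw [hD2]; gcongr; exact (hcon τ hτ).le
          _ = _ := by ring
      have := HB _ hp t ht _ hpd r (D * s) hr hr1 hbd
      have hDpos : 0 < D := hδ.trans_le hDδ
      rw [abs_of_pos (by positivity), le_div_iff₀ hr] at this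
      have e : B * s = r * δ / 2 := by rw [hr_def]; field_simp
      have h5 : D * (D * r) ≤ D * (r * δ / 2) := by rw [← e]; nlinarith
      have h6 := le_of_mul_le_mul_left h5 hDpos
      nlinarith
    obtain ⟨τ, hτ, h3⟩ := this
    have : s ^ 2 ∈ uIcc (∑ i, q i t ^ 2) (∑ i, q i τ ^ 2) := by
      rw [uIcc_of_le (h1.le.trans h3)]; exact ⟨h1.le, h3⟩
    obtain ⟨z, hz, hzs⟩ := intermediate_value_uIcc hcont.continuousOn this
    have hzI : z ∈ Icc (t - r) (t + r) :=
      (uIcc_subset_Icc ⟨by linarith, by linarith⟩ hτ) hz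
    have hzpi : z ∈ Ioo (-Real.pi) Real.pi :=
      ⟨by linarith [hzI.1, ht.1], by linarith [hzI.2, ht.2]⟩
    have htpi : t ∈ Ioo (-Real.pi) Real.pi := ⟨by linarith [ht.1], by linarith [ht.2]⟩
    rcases hZ' with h0 | h0
    · have := h0 t htpi
      linarith
    · refine mem_iUnion₂.2 ⟨z, h0 z hzpi ?_, ⟨by linarith [hzI.2], by linarith [hzI.1]⟩⟩
      simpa [sub_eq_add_neg] using sub_eq_zero.2 hzs
  calc _ ≤ volume (⋃ z ∈ Z, Icc (z - r) (z + r)) := measure_mono hsub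
    _ ≤ ∑ z ∈ Z, volume (Icc (z - r) (z + r)) := measure_biUnion_finset_le _ _
    _ = ∑ z ∈ Z, ENNReal.ofReal (2 * r) := by
        refine Finset.sum_congr rfl fun z _ => ?_
        rw [Real.volume_Icc]; congr 1; ring
    _ = ENNReal.ofReal (Z.card * (2 * r)) := by
        rw [Finset.sum_const, nsmul_eq_mul, ENNReal.ofReal_mul (by positivity)]; simp
    _ ≤ _ := by
        apply ENNReal.ofReal_le_ofReal
        have h1 : (4 * (k : ℝ) + 1) * (4 * B) * (s / δ) = (4 * k + 1) * (2 * r) := by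
          rw [hr_def]; ring
        rw [h1]
        gcongr
        have : (Z.card : ℝ) ≤ ((2 * k + 2 * k : ℕ) : ℝ) := by exact_mod_cast hZ
        push_cast at this
        linarith

/-- A continuous function has a constant sign on an interval free of its zeros. The disjunction in
`hZ` is the one provided by `Tr.zeros`. -/
lemma sign_of_zeros {h : ℝ → ℝ} (hc : Continuous h) {c d : ℝ} {Z : Finset ℝ}
    (hI : Ioo c d ⊆ Ioo (-Real.pi) Real.pi)
    (hZ : (∀ t ∈ Ioo (-Real.pi) Real.pi, h t = 0) ∨
      ∀ t ∈ Ioo (-Real.pi) Real.pi, h t = 0 → t ∈ Z)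
    (hd : ∀ z ∈ Z, z ∉ Ioo c d) :
    (∀ t ∈ Ioo c d, 0 ≤ h t) ∨ (∀ t ∈ Ioo c d, h t < 0) := by
  rcases hZ with h0 | h0
  · left; intro t ht; exact (h0 t (hI ht)).ge
  · by_contra! hcon
    obtain ⟨⟨x, hx, hx0⟩, y, hy, hy0⟩ := hcon
    obtain ⟨z, hz, hz0⟩ := intermediate_value_uIcc (a := x) (b := y) (f := h) hc.continuousOn
      (show (0 : ℝ) ∈ uIcc (h x) (h y) by
        rw [uIcc_of_le (hx0.le.trans hy0)]; exact ⟨hx0.le, hy0⟩)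
    have hzI : z ∈ Ioo c d := ordConnected_Ioo.uIcc_subset hx hy hz
    exact hd z (h0 z (hI hzI) hz0) hzI

lemma forall_Icc_of_Ioo {h : ℝ → ℝ} (hc : Continuous h) {c d r : ℝ} (hcd : c < d)
    (H : ∀ t ∈ Ioo c d, r ≤ h t) : ∀ t ∈ Icc c d, r ≤ h t := by
  have h1 : closure (Ioo c d) ⊆ {t | r ≤ h t} :=
    closure_minimal H (isClosed_le continuous_const hc)
  rw [closure_Ioo hcd.ne] at h1
  exact h1

/-- One-sided van der Corput estimate on an interval where `|q'| ≥ δ` and `q''` has the constant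
sign `η`: there `φ'(q)` is at most the derivative of `(φ(q) - η ε) / q'`. -/
lemma vdc_one_sided {q φ : ℝ → ℝ} (hq : ContDiff ℝ 2 q) (hφ : ContDiff ℝ 1 φ) {c d ε δ η : ℝ}
    (hcd : c ≤ d) (hδ : 0 < δ) (hε : ∀ x, |φ x| ≤ ε) (hη : η = 1 ∨ η = -1)
    (h1 : ∀ t ∈ Icc c d, δ ≤ |deriv q t|) (h2 : ∀ t ∈ Icc c d, 0 ≤ η * deriv (deriv q) t) :
    ∫ t in c..d, deriv φ (q t) ≤ 4 * ε / δ := by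
  have hq1 : ContDiff ℝ 1 (deriv q) := by
    have : ContDiff ℝ (1 + 1) q := by exact_mod_cast hq
    exact (contDiff_succ_iff_deriv.1 this).2.2
  have hq2 : Continuous (deriv (deriv q)) := hq1.continuous_deriv le_rfl
  have hdq : ∀ t, HasDerivAt q (deriv q t) t :=
    fun t => ((hq.differentiable (by norm_num)) t).hasDerivAt
  have hdq1 : ∀ t, HasDerivAt (deriv q) (deriv (deriv q) t) t :=
    fun t => ((hq1.differentiable (by norm_num)) t).hasDerivAt
  have hdφ : ∀ t, HasDerivAt φ (deriv φ t) t :=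
    fun t => ((hφ.differentiable (by norm_num)) t).hasDerivAt
  have hcφ : Continuous (deriv φ) := hφ.continuous_deriv le_rfl
  have hne : ∀ t ∈ Icc c d, deriv q t ≠ 0 := fun t ht h0 => by
    have := h1 t ht; rw [h0, abs_zero] at this; linarith
  have hε0 : 0 ≤ ε := (abs_nonneg _).trans (hε 0)
  have hηa : |η| = 1 := by rcases hη with rfl | rfl <;> simp
  -- the shift by `η * ε` gives `φ(q) - η * ε` the sign opposite to that of the second derivative of `q`
  let U : ℝ → ℝ := fun t => (φ (q t) - η * ε) / deriv q t
  let U' : ℝ → ℝ := fun t => ((deriv φ (q t) * deriv q t) * deriv q t -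
    (φ (q t) - η * ε) * deriv (deriv q) t) / deriv q t ^ 2
  have hU : ∀ t ∈ Icc c d, HasDerivAt U (U' t) t := fun t ht => by
    have h3 : HasDerivAt (fun t => φ (q t) - η * ε) (deriv φ (q t) * deriv q t) t :=
      (HasDerivAt.comp (h₂ := φ) t (hdφ _) (hdq t)).sub_const _
    exact h3.div (hdq1 t) (hne t ht)
  have hU'c : ContinuousOn U' (Icc c d) := by
    refine ContinuousOn.div ?_ ?_ fun t ht => pow_ne_zero 2 (hne t ht)
    · have := hφ.continuous; have := hq.continuous; have := hq1.continuous
      exact Continuous.continuousOn (by fun_prop)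
    · exact (hq1.continuous.pow 2).continuousOn
  have hUI : IntervalIntegrable U' volume c d := by
    apply ContinuousOn.intervalIntegrable; rwa [uIcc_of_le hcd]
  have hle : ∀ t ∈ Icc c d, deriv φ (q t) ≤ U' t := fun t ht => by
    have h3 : 0 < deriv q t ^ 2 := by have := hne t ht; positivity
    simp only [U']
    rw [le_div_iff₀ h3]
    have h4 : 0 ≤ (η * ε - φ (q t)) * deriv (deriv q) t := by
      have h5 := h2 t ht
      have h6 := abs_le.1 (hε (q t))
      rcases hη with rfl | rfl <;> nlinarith [h6.1, h6.2]
    nlinarith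
  have hUb : ∀ t ∈ Icc c d, |U t| ≤ 2 * ε / δ := fun t ht => by
    simp only [U]
    rw [abs_div]
    have h3 : |φ (q t) - η * ε| ≤ 2 * ε := by
      calc _ ≤ |φ (q t)| + |η * ε| := abs_sub _ _
        _ ≤ ε + ε := by
          gcongr
          · exact hε _
          · rw [abs_mul, hηa, one_mul, abs_of_nonneg hε0]
        _ = _ := by ring
    exact div_le_div₀ (by positivity) h3 hδ (h1 t ht)
  calc _ ≤ ∫ t in c..d, U' t := by
        refine intervalIntegral.integral_mono_on hcd ?_ hUI hle
        exact (hcφ.comp hq.continuous).intervalIntegrable _ _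
    _ = U d - U c := intervalIntegral.integral_eq_sub_of_hasDerivAt
        (fun t ht => hU t (by rwa [uIcc_of_le hcd] at ht)) hUI
    _ ≤ _ := by
        have h3 := abs_le.1 (hUb c ⟨le_rfl, hcd⟩)
        have h4 := abs_le.1 (hUb d ⟨hcd, le_rfl⟩)
        have h5 : 4 * ε / δ = 2 * ε / δ + 2 * ε / δ := by ring
        linarith [h3.1, h4.2]

lemma vdc {q φ : ℝ → ℝ} (hq : ContDiff ℝ 2 q) (hφ : ContDiff ℝ 1 φ) {c d ε δ η : ℝ}
    (hcd : c ≤ d) (hδ : 0 < δ) (hε : ∀ x, |φ x| ≤ ε) (hη : η = 1 ∨ η = -1)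
    (h1 : ∀ t ∈ Icc c d, δ ≤ |deriv q t|) (h2 : ∀ t ∈ Icc c d, 0 ≤ η * deriv (deriv q) t) :
    |∫ t in c..d, deriv φ (q t)| ≤ 4 * ε / δ := by
  have h3 := vdc_one_sided hq hφ hcd hδ hε hη h1 h2
  have h4 := vdc_one_sided hq hφ.neg hcd hδ (fun x => by simpa using hε x) hη h1 h2
  have e : ∀ x, deriv (-φ) x = - deriv φ x := fun x => deriv.neg
  simp only [show (fun x => -φ x) = -φ from rfl, e, intervalIntegral.integral_neg] at h4
  exact abs_le.2 ⟨by linarith, h3⟩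

/-- A bound for the integral over all subintervals avoiding a finite set `Z` gives a bound over the
whole interval; each point of `Z` at most doubles it. -/
lemma split_bound {f : ℝ → ℝ} {a b : ℝ} (hf : IntervalIntegrable f volume a b) (hab : a ≤ b)
    (Z : Finset ℝ) : ∀ (B : ℝ), (∀ c d, a ≤ c → c ≤ d → d ≤ b → (∀ z ∈ Z, z ∉ Ioo c d) →
      |∫ t in c..d, f t| ≤ B) → |∫ t in a..b, f t| ≤ 2 ^ Z.card * B := by
  classical
  induction Z using Finset.induction_on with
  | empty =>
    intro B h
    simpa using h a b le_rfl hab le_rfl (by simp)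
  | insert z Z hz ih =>
    intro B h
    rw [Finset.card_insert_of_notMem hz, pow_succ, mul_assoc]
    refine ih (2 * B) fun c d hac hcd hdb hd => ?_
    have hB : 0 ≤ B := by
      have := h c c hac le_rfl (hcd.trans hdb) (by simp)
      simpa using this
    by_cases hzc : z ∈ Ioo c d
    · have hi : ∀ x y, x ∈ Icc a b → y ∈ Icc a b → IntervalIntegrable f volume x y :=
        fun x y hx hy => hf.mono_set (by
          rw [uIcc_of_le hab]; exact uIcc_subset_Icc hx hy)
      have hzI : z ∈ Icc a b := ⟨by linarith [hzc.1], by linarith [hzc.2]⟩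
      rw [← intervalIntegral.integral_add_adjacent_intervals
        (hi c z ⟨hac, by linarith⟩ hzI) (hi z d hzI ⟨by linarith, hdb⟩)]
      have h1 := h c z hac hzc.1.le (by linarith [hzI.2]) fun w hw hw' => by
        rcases Finset.mem_insert.1 hw with rfl | hw
        · exact lt_irrefl _ hw'.2
        · exact hd w hw ⟨hw'.1, hw'.2.trans hzc.2⟩
      have h2 := h z d hzI.1 hzc.2.le hdb fun w hw hw' => by
        rcases Finset.mem_insert.1 hw with rfl | hw
        · exact lt_irrefl _ hw'.1
        · exact hd w hw ⟨hzc.1.trans hw'.1, hw'.2⟩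
      exact (abs_add_le _ _).trans (by linarith)
    · have := h c d hac hcd hdb fun w hw => by
        rcases Finset.mem_insert.1 hw with rfl | hw
        · exact hzc
        · exact hd w hw
      linarith

/-- Oscillation estimate: on the part of the quarter circle where `a` and `b` are non-negative,
and `|q'| ≥ δ`, the integral of `φ'(q)` is at most `C ε / δ`. The zeros of `a`, `b` and `q''` cut the
quarter circle into a bounded number of intervals, and `vdc` applies on each of them. -/
lemma osc (K M K₁ M₁ K₂ M₂ : ℕ) : ∃ C : ℝ, 0 < C ∧ ∀ (q a b φ : ℝ → ℝ) (ε δ : ℝ),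
    Tr K M q → Tr K₁ M₁ a → Tr K₂ M₂ b → ContDiff ℝ 2 q → Continuous a → Continuous b →
    ContDiff ℝ 1 φ → 0 < δ → (∀ x, |φ x| ≤ ε) →
    (∀ t ∈ Icc 0 (Real.pi / 2), 0 ≤ a t → 0 ≤ b t → δ ≤ |deriv q t|) →
    |∫ t in (0 : ℝ)..(Real.pi / 2),
      {t | 0 ≤ a t ∧ 0 ≤ b t}.indicator (fun t => deriv φ (q t)) t| ≤ C * (ε / δ) := by
  classical
  refine ⟨2 ^ (M₁ + M₂ + (M + 1 + 1)) * 4, by positivity, ?_⟩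
  intro q a b φ ε δ hq ha hb hqc hac hbc hφ hδ hε hE
  have hpi := Real.pi_pos
  have hq1 : ContDiff ℝ 1 (deriv q) := by
    have : ContDiff ℝ (1 + 1) q := by exact_mod_cast hqc
    exact (contDiff_succ_iff_deriv.1 this).2.2
  have hq2 : Continuous (deriv (deriv q)) := hq1.continuous_deriv le_rfl
  have hε0 : 0 ≤ ε := (abs_nonneg _).trans (hε 0)
  have hT2 : Tr K (M + 1 + 1) (deriv (deriv q)) :=
    (hq.deriv fun t => ((hqc.differentiable (by norm_num)) t).hasDerivAt).deriv
      fun t => ((hq1.differentiable (by norm_num)) t).hasDerivAt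
  obtain ⟨Za, hZa, hZa'⟩ := ha.zeros
  obtain ⟨Zb, hZb, hZb'⟩ := hb.zeros
  obtain ⟨Zq, hZq, hZq'⟩ := hT2.zeros
  have hcard : (Za ∪ Zb ∪ Zq).card ≤ M₁ + M₂ + (M + 1 + 1) :=
    (Finset.card_union_le _ _).trans (add_le_add ((Finset.card_union_le _ _).trans
      (add_le_add hZa hZb)) hZq)
  have hcφ : Continuous fun t => deriv φ (q t) :=
    (hφ.continuous_deriv le_rfl).comp hqc.continuous
  set E : Set ℝ := {t | 0 ≤ a t ∧ 0 ≤ b t} with hEdef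
  have hEm : MeasurableSet E :=
    ((isClosed_le continuous_const hac).inter (isClosed_le continuous_const hbc)).measurableSet
  have hInt : IntervalIntegrable (E.indicator fun t => deriv φ (q t)) volume 0 (Real.pi / 2) := by
    have := hcφ.intervalIntegrable (μ := volume) 0 (Real.pi / 2)
    rw [intervalIntegrable_iff] at this ⊢
    exact this.indicator hEm
  have := split_bound hInt (by linarith) (Za ∪ Zb ∪ Zq) (4 * ε / δ) ?_
  · calc _ ≤ _ := this
      _ ≤ 2 ^ (M₁ + M₂ + (M + 1 + 1)) * (4 * ε / δ) := by
        gcongr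
        norm_num
      _ = _ := by ring
  intro c d hc hcd hd hZ
  rcases hcd.eq_or_lt with rfl | hcd
  · simp; positivity
  have hI : Ioo c d ⊆ Ioo (-Real.pi) Real.pi := fun t ht =>
    ⟨by linarith [ht.1], by linarith [ht.2]⟩
  have hI2 : Ioo c d ⊆ Icc 0 (Real.pi / 2) := fun t ht =>
    ⟨by linarith [ht.1], by linarith [ht.2]⟩
  have hsa := sign_of_zeros hac hI hZa' fun z hz => hZ z (by simp [hz])
  have hsb := sign_of_zeros hbc hI hZb' fun z hz => hZ z (by simp [hz])
  have hsq := sign_of_zeros hq2 hI hZq' fun z hz => hZ z (by simp [hz])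
  have hzero : (∀ t ∈ Ioo c d, t ∉ E) →
      |∫ t in c..d, E.indicator (fun t => deriv φ (q t)) t| ≤ 4 * ε / δ := fun h => by
    rw [intervalIntegral.integral_of_le hcd.le, integral_Ioc_eq_integral_Ioo,
      setIntegral_congr_fun measurableSet_Ioo (g := fun _ => (0 : ℝ))
        (fun t ht => indicator_of_notMem (h t ht) _)]
    simp; positivity
  rcases hsa with hsa | hsa
  swap
  · exact hzero fun t ht h => absurd h.1 (not_le.2 (hsa t ht))
  rcases hsb with hsb | hsb
  swap
  · exact hzero fun t ht h => absurd h.2 (not_le.2 (hsb t ht))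
  have e : ∫ t in c..d, E.indicator (fun t => deriv φ (q t)) t = ∫ t in c..d, deriv φ (q t) := by
    rw [intervalIntegral.integral_of_le hcd.le, intervalIntegral.integral_of_le hcd.le,
      integral_Ioc_eq_integral_Ioo, integral_Ioc_eq_integral_Ioo]
    exact setIntegral_congr_fun measurableSet_Ioo
      fun t ht => indicator_of_mem (show t ∈ E from ⟨hsa t ht, hsb t ht⟩) _
  rw [e]
  have h1 : ∀ t ∈ Icc c d, δ ≤ |deriv q t| :=
    forall_Icc_of_Ioo hq1.continuous.abs hcd fun t ht =>
      hE t (hI2 ht) (hsa t ht) (hsb t ht)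
  rcases hsq with hsq | hsq
  · refine vdc hqc hφ hcd.le hδ hε (Or.inl rfl) h1 ?_
    simpa using forall_Icc_of_Ioo hq2 hcd hsq
  · refine vdc hqc hφ hcd.le hδ hε (Or.inr rfl) h1 ?_
    refine forall_Icc_of_Ioo (by fun_prop) hcd fun t ht => ?_
    have := hsq t ht; linarith

end GaussPoly

/-! ### Standard Gaussian vectors and rotations -/

namespace GaussPoly
open Set MvPolynomial

/-- The standard Gaussian measure on `ℝⁿ`; it is reducible, so that the instances for product
measures apply. -/
noncomputable abbrev gam (n : ℕ) : Measure (Fin n → ℝ) :=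
  Measure.pi fun _ : Fin n => gaussianReal 0 1

/-- `f` has finite moments of all orders with respect to `P`. -/
def AllLp {Ω : Type*} [MeasurableSpace Ω] (P : Measure Ω) (f : Ω → ℝ) : Prop :=
  ∀ p : ENNReal, p ≠ ⊤ → MemLp f p P

section AllLp
variable {Ω : Type*} [MeasurableSpace Ω] {P : Measure Ω}

lemma AllLp.integrable {f : Ω → ℝ} (h : AllLp P f) : Integrable f P :=
  memLp_one_iff_integrable.1 (h 1 (by simp))

lemma AllLp.const [IsProbabilityMeasure P] (c : ℝ) : AllLp P (fun _ => c) := fun _ _ => memLp_const c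

lemma AllLp.add {f g : Ω → ℝ} (hf : AllLp P f) (hg : AllLp P g) :
    AllLp P (fun x => f x + g x) := fun p hp => (hf p hp).add (hg p hp)

lemma AllLp.mul {f g : Ω → ℝ} (hf : AllLp P f) (hg : AllLp P g) :
    AllLp P (fun x => f x * g x) := fun p hp => by
  have h2 : 2 * p ≠ ⊤ := ENNReal.mul_ne_top (by simp) hp
  have : ENNReal.HolderTriple (2 * p) (2 * p) p := ⟨by
    rw [ENNReal.mul_inv (by simp) (by simp), ← add_mul, ENNReal.inv_two_add_inv_two, one_mul]⟩
  exact (hg _ h2).mul (hf _ h2)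

lemma AllLp.sum {ι : Type*} (s : Finset ι) {f : ι → Ω → ℝ} (h : ∀ i ∈ s, AllLp P (f i)) :
    AllLp P (fun x => ∑ i ∈ s, f i x) := fun p hp => memLp_finsetSum _ fun i hi => h i hi p hp

lemma AllLp.sub {f g : Ω → ℝ} (hf : AllLp P f) (hg : AllLp P g) :
    AllLp P (fun x => f x - g x) := fun p hp => (hf p hp).sub (hg p hp)

lemma AllLp.sq {f : Ω → ℝ} (hf : AllLp P f) : AllLp P (fun x => f x ^ 2) := by
  simpa only [pow_two] using hf.mul hf

lemma AllLp.eval [IsProbabilityMeasure P] {n : ℕ} {X : Ω → Fin n → ℝ} (h : ∀ i, AllLp P (fun ω => X ω i))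
    (p : MvPolynomial (Fin n) ℝ) : AllLp P (fun ω => MvPolynomial.eval (X ω) p) := by
  induction p using MvPolynomial.induction_on with
  | C a => simpa using AllLp.const a
  | add p q hp hq => simpa using hp.add hq
  | mul_X p i hp => simpa using hp.mul (h i)

end AllLp

lemma AllLp.comp_mp {Ω Ω' : Type*} [MeasurableSpace Ω] [MeasurableSpace Ω'] {P : Measure Ω}
    {P' : Measure Ω'} {f : Ω' → ℝ} (h : AllLp P' f) {T : Ω → Ω'} (hT : MeasurePreserving T P P') :
    AllLp P (fun ω => f (T ω)) := fun p hp => (h p hp).comp_measurePreserving hT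

lemma allLp_coord {n : ℕ} (i : Fin n) : AllLp (gam n) (fun x => x i) := by
  have h : AllLp (gaussianReal 0 1) (fun x : ℝ => x) := fun p hp => memLp_id_gaussianReal' p hp
  exact h.comp_mp (measurePreserving_eval (fun _ : Fin n => gaussianReal 0 1) i)

lemma allLp_eval {n : ℕ} (p : MvPolynomial (Fin n) ℝ) :
    AllLp (gam n) (fun x => MvPolynomial.eval x p) := AllLp.eval allLp_coord p

lemma integrable_eval {n : ℕ} (p : MvPolynomial (Fin n) ℝ) :
    Integrable (fun x => MvPolynomial.eval x p) (gam n) := (allLp_eval p).integrable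

instance isGaussian_gam (n : ℕ) : IsGaussian (gam n) := by
  have h1 : ∀ i : Fin n, HasGaussianLaw (fun x : Fin n → ℝ => x i) (gam n) := fun i =>
    HasLaw.hasGaussianLaw (μ := gaussianReal 0 1) ⟨(measurable_pi_apply i).aemeasurable,
      (measurePreserving_eval (fun _ : Fin n => gaussianReal 0 1) i).map_eq⟩
  have h2 : iIndepFun (fun (i : Fin n) (x : Fin n → ℝ) => x i) (gam n) :=
    iIndepFun_pi (X := fun _ => id) fun _ => aemeasurable_id
  have := (iIndepFun.hasGaussianLaw h1 h2).isGaussian_map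
  have e : (fun (ω : Fin n → ℝ) => fun i => ω i) = id := rfl
  rwa [e, Measure.map_id] at this

lemma integral_coord {n : ℕ} (i : Fin n) : ∫ x, x i ∂(gam n) = 0 := by
  rw [← integral_map (f := fun y : ℝ => y) (φ := fun x : Fin n → ℝ => x i)
    (measurable_pi_apply i).aemeasurable (by fun_prop), show (gam n).map (fun x => x i) = gaussianReal 0 1 from
      (measurePreserving_eval (fun _ : Fin n => gaussianReal 0 1) i).map_eq]
  simp

/-- A linear form of a standard Gaussian vector is Gaussian. -/
lemma map_linear {n : ℕ} (v : Fin n → ℝ) :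
    (gam n).map (fun y => ∑ j, y j * v j) = gaussianReal 0 (∑ j, v j ^ 2).toNNReal := by
  let L : (Fin n → ℝ) →L[ℝ] ℝ := ∑ j, (v j) • ContinuousLinearMap.proj j
  have hL : ∀ y, L y = ∑ j, y j * v j := fun y => by
    simp [L, mul_comm]
  have h1 : HasGaussianLaw (fun y => L y) (gam n) := (IsGaussian.hasGaussianLaw_id).map_fun L
  have h2 := h1.map_eq_gaussianReal
  simp only [hL] at h2
  rw [h2]
  congr 1
  · rw [integral_finsetSum _ fun j _ => (allLp_coord j).integrable.mul_const _]
    simp [integral_mul_const, integral_coord]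
  · congr 1
    have hX : ∀ j : Fin n, MemLp (fun y : ℝ => y * v j) 2 (gaussianReal 0 1) :=
      fun j => (memLp_id_gaussianReal' 2 (by simp)).mul_const _
    have h3 := variance_sum_pi hX
    have e : (∑ i, fun ω : Fin n → ℝ => ω i * v i) = fun y => ∑ j, y j * v j := by
      ext y; simp
    rw [e] at h3
    rw [h3]
    refine Finset.sum_congr rfl fun j _ => ?_
    have := variance_mul_const (v j) (fun y : ℝ => y) (gaussianReal 0 1)
    rw [this, variance_fun_id_gaussianReal]
    simp

lemma integral_linear_sq {n : ℕ} (v : Fin n → ℝ) :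
    ∫ y, (∑ j, y j * v j) ^ 2 ∂(gam n) = ∑ j, v j ^ 2 := by
  rw [← integral_map (f := fun z : ℝ => z ^ 2) (φ := fun y : Fin n → ℝ => ∑ j, y j * v j)
    (Measurable.aemeasurable (by fun_prop)) (by fun_prop), map_linear]
  have h := variance_fun_id_gaussianReal (μ := 0) (v := (∑ j, v j ^ 2).toNNReal)
  rw [variance_eq_integral (by fun_prop)] at h
  simp only [integral_id_gaussianReal, sub_zero] at h
  rw [h, Real.coe_toNNReal _ (Finset.sum_nonneg fun _ _ => sq_nonneg _)]

/-- First component `cos t • x + sin t • y` of the rotation of `z = (x, y)` by the angle `t`. -/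
noncomputable def cx {n : ℕ} (t : ℝ) (z : (Fin n → ℝ) × (Fin n → ℝ)) : Fin n → ℝ :=
  Real.cos t • z.1 + Real.sin t • z.2

/-- Second component `-sin t • x + cos t • y` of the rotation of `z = (x, y)` by the angle `t`; it is
the derivative of `cx t z` in `t`. -/
noncomputable def cy {n : ℕ} (t : ℝ) (z : (Fin n → ℝ) × (Fin n → ℝ)) : Fin n → ℝ :=
  -Real.sin t • z.1 + Real.cos t • z.2

/-- The rotation of the pair `z = (x, y)` of vectors by the angle `t`. -/
noncomputable def rot {n : ℕ} (t : ℝ) (z : (Fin n → ℝ) × (Fin n → ℝ)) :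
    (Fin n → ℝ) × (Fin n → ℝ) := (cx t z, cy t z)

/-- The law of a pair of independent standard Gaussian vectors is invariant under rotations. -/
lemma rot_mp {n : ℕ} (t : ℝ) :
    MeasurePreserving (rot t) ((gam n).prod (gam n)) ((gam n).prod (gam n)) := by
  have h := IsGaussian.map_rotation_eq_self (μ := gam n) (by
    ext i
    simp only [id]
    rw [eval_integral (fun i => (allLp_coord i).integrable)]
    simpa using integral_coord i) t
  have e : (ContinuousLinearMap.rotation t : (Fin n → ℝ) × (Fin n → ℝ) → _) = rot t := by
    ext z <;> simp [rot, cx, cy, ContinuousLinearMap.rotation_apply]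
  rw [e] at h
  exact ⟨by unfold rot cx cy; fun_prop, h⟩

lemma cx_mp {n : ℕ} (t : ℝ) : MeasurePreserving (cx t) ((gam n).prod (gam n)) (gam n) :=
  measurePreserving_fst.comp (rot_mp t)

end GaussPoly

/-! ### Polynomials along circles and Poincaré inequalities -/

namespace GaussPoly
open Set

/-- The derivative of the polynomial `p` at the point `z.1` in the direction `z.2`. -/
noncomputable def dd {n : ℕ} (p : MvPolynomial (Fin n) ℝ) (z : (Fin n → ℝ) × (Fin n → ℝ)) : ℝ :=
  ∑ j, z.2 j * MvPolynomial.eval z.1 (MvPolynomial.pderiv j p)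

lemma hasDerivAt_circle {n : ℕ} (p : MvPolynomial (Fin n) ℝ) (z : (Fin n → ℝ) × (Fin n → ℝ))
    (t : ℝ) : HasDerivAt (fun t => MvPolynomial.eval (cx t z) p) (dd p (rot t z)) t := by
  induction p using MvPolynomial.induction_on with
  | C a => simpa [dd] using hasDerivAt_const t a
  | add p q hp hq =>
    simp only [map_add]
    refine (hp.add hq).congr_deriv ?_
    simp [dd, mul_add, Finset.sum_add_distrib]
  | mul_X p i hp =>
    have h1 : HasDerivAt (fun t => cx t z i) (cy t z i) t := by
      simp only [cx, cy, Pi.add_apply, Pi.smul_apply, smul_eq_mul]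
      exact ((Real.hasDerivAt_cos t).mul_const _).add ((Real.hasDerivAt_sin t).mul_const _)
    simp only [map_mul, MvPolynomial.eval_X]
    refine (hp.mul h1).congr_deriv ?_
    simp only [dd, MvPolynomial.pderiv_mul, MvPolynomial.pderiv_X, map_add, map_mul,
      MvPolynomial.eval_X, mul_add, Finset.sum_add_distrib, Finset.sum_mul, rot]
    congr 1
    · exact Finset.sum_congr rfl fun j _ => by ring
    · rw [Finset.sum_eq_single i]
      · simp; ring
      · intro j _ hj
        simp [hj.symm]
      · simp

lemma contDiff_circle {n : ℕ} (p : MvPolynomial (Fin n) ℝ) (z : (Fin n → ℝ) × (Fin n → ℝ))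
    (m : WithTop ℕ∞) : ContDiff ℝ m (fun t => MvPolynomial.eval (cx t z) p) := by
  induction p using MvPolynomial.induction_on with
  | C a => simpa using contDiff_const
  | add p q hp hq => simpa using hp.add hq
  | mul_X p i hp =>
    have h1 : ContDiff ℝ m (fun t => cx t z i) := by
      simp only [cx, Pi.add_apply, Pi.smul_apply, smul_eq_mul]
      exact (Real.contDiff_cos.mul contDiff_const).add (Real.contDiff_sin.mul contDiff_const)
    simpa using hp.mul h1

lemma Tr.prod {ι : Type*} (s : Finset ι) (q : ι → ℝ → ℝ) (k : ι → ℕ)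
    (h : ∀ i ∈ s, Tr (k i) (2 * k i) (q i)) :
    Tr (∑ i ∈ s, k i) (2 * ∑ i ∈ s, k i) (fun t => ∏ i ∈ s, q i t) := by
  classical
  induction s using Finset.induction_on with
  | empty => simpa using Tr.one
  | insert i s hi ih =>
    simp only [Finset.prod_insert hi, Finset.sum_insert hi]
    have := (h i (Finset.mem_insert_self i s)).mul
      (ih fun j hj => h j (Finset.mem_insert_of_mem hj))
    rwa [← mul_add] at this

/-- Along a circle a polynomial of degree at most `k` is a trigonometric polynomial of degree at
most `k`. The bound does not depend on the dimension `n`. -/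
lemma tr_circle {n k : ℕ} {p : MvPolynomial (Fin n) ℝ} (hp : p.totalDegree ≤ k)
    (z : (Fin n → ℝ) × (Fin n → ℝ)) : Tr k (2 * k) (fun t => MvPolynomial.eval (cx t z) p) := by
  simp only [MvPolynomial.eval_eq]
  refine Tr.sum _ fun m hm => Tr.const_mul ?_ _
  have h1 : ∑ i ∈ m.support, m i ≤ k := (MvPolynomial.le_totalDegree hm).trans hp
  have h2 : Tr (∑ i ∈ m.support, m i) (2 * ∑ i ∈ m.support, m i)
      (fun t => ∏ i ∈ m.support, cx t z i ^ m i) := by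
    refine Tr.prod _ _ _ fun i _ => ?_
    have h3 := (Tr.cos_sin (z.1 i) (z.2 i)).pow (m i)
    rw [mul_one, mul_comm _ 2] at h3
    simpa [cx] using h3
  have h4 := h2.lift (k - ∑ i ∈ m.support, m i)
  rwa [← mul_add, Nat.add_sub_cancel' h1] at h4

lemma totalDegree_pderiv_le {n k : ℕ} {p : MvPolynomial (Fin n) ℝ} (hp : p.totalDegree ≤ k)
    (i : Fin n) : (MvPolynomial.pderiv i p).totalDegree ≤ k - 1 := by
  rw [p.as_sum, map_sum]
  refine (MvPolynomial.totalDegree_finsetSum_le fun m hm => ?_)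
  rw [MvPolynomial.pderiv_monomial]
  by_cases h0 : m i = 0
  · simp [h0]
  refine (MvPolynomial.totalDegree_monomial_le _ _).trans ?_
  have h1 : (m.sum fun _ e => e) ≤ k := (MvPolynomial.le_totalDegree hm).trans hp
  have h2 : m = (m - Finsupp.single i 1) + Finsupp.single i 1 := by
    ext j
    by_cases hj : i = j
    · subst hj; simp; omega
    · simp [hj]
  rw [h2, Finsupp.sum_add_index' (by simp) (by simp)] at h1
  simp at h1
  exact Nat.le_sub_one_of_lt (by simpa [Finsupp.degree, Finsupp.sum] using h1)

/-- Expectation of the polynomial `p` with respect to the standard Gaussian measure. -/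
noncomputable def Ex {n : ℕ} (p : MvPolynomial (Fin n) ℝ) : ℝ :=
  ∫ x, MvPolynomial.eval x p ∂(gam n)

lemma Ex_add {n : ℕ} (p q : MvPolynomial (Fin n) ℝ) : Ex (p + q) = Ex p + Ex q := by
  simp only [Ex, map_add]; exact integral_add (integrable_eval p) (integrable_eval q)

lemma Ex_sub {n : ℕ} (p q : MvPolynomial (Fin n) ℝ) : Ex (p - q) = Ex p - Ex q := by
  simp only [Ex, map_sub]; exact integral_sub (integrable_eval p) (integrable_eval q)

lemma Ex_C_mul {n : ℕ} (a : ℝ) (p : MvPolynomial (Fin n) ℝ) :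
    Ex (MvPolynomial.C a * p) = a * Ex p := by
  simp only [Ex, map_mul, MvPolynomial.eval_C]; exact integral_const_mul _ _

lemma Ex_C {n : ℕ} (a : ℝ) : Ex (n := n) (MvPolynomial.C a) = a := by simp [Ex]

lemma Ex_sum {n : ℕ} {ι : Type*} (s : Finset ι) (p : ι → MvPolynomial (Fin n) ℝ) :
    Ex (∑ i ∈ s, p i) = ∑ i ∈ s, Ex (p i) := by
  simp only [Ex, map_sum]; exact integral_finsetSum _ fun i _ => integrable_eval _

lemma Ex_mono {n : ℕ} {p q : MvPolynomial (Fin n) ℝ}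
    (h : ∀ x, MvPolynomial.eval x p ≤ MvPolynomial.eval x q) : Ex p ≤ Ex q :=
  integral_mono (integrable_eval p) (integrable_eval q) h

lemma Ex_nonneg {n : ℕ} {p : MvPolynomial (Fin n) ℝ}
    (h : ∀ x, 0 ≤ MvPolynomial.eval x p) : 0 ≤ Ex p := integral_nonneg h

/-- Squared Euclidean norm `∑ i, F i ^ 2` of a finite family of polynomials, viewed as a
vector-valued polynomial. -/
noncomputable def NP {n : ℕ} {ι : Type} [Fintype ι] (F : ι → MvPolynomial (Fin n) ℝ) :
    MvPolynomial (Fin n) ℝ := ∑ i, F i ^ 2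

lemma eval_NP {n : ℕ} {ι : Type} [Fintype ι] (F : ι → MvPolynomial (Fin n) ℝ) (x : Fin n → ℝ) :
    MvPolynomial.eval x (NP F) = ∑ i, MvPolynomial.eval x (F i) ^ 2 := by simp [NP]

lemma eval_NP_nonneg {n : ℕ} {ι : Type} [Fintype ι] (F : ι → MvPolynomial (Fin n) ℝ)
    (x : Fin n → ℝ) : 0 ≤ MvPolynomial.eval x (NP F) := by
  rw [eval_NP]; exact Finset.sum_nonneg fun _ _ => sq_nonneg _

lemma Ex_NP_nonneg {n : ℕ} {ι : Type} [Fintype ι] (F : ι → MvPolynomial (Fin n) ℝ) :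
    0 ≤ Ex (NP F) := Ex_nonneg (eval_NP_nonneg F)

lemma totalDegree_NP {n k : ℕ} {ι : Type} [Fintype ι] {F : ι → MvPolynomial (Fin n) ℝ}
    (h : ∀ i, (F i).totalDegree ≤ k) : (NP F).totalDegree ≤ 2 * k :=
  MvPolynomial.totalDegree_finsetSum_le fun i _ =>
    (MvPolynomial.totalDegree_pow _ _).trans (Nat.mul_le_mul_left 2 (h i))

/-- The family of all first partial derivatives of the members of the family `F`. -/
noncomputable def grad {n : ℕ} {ι : Type} (F : ι → MvPolynomial (Fin n) ℝ) :
    ι × Fin n → MvPolynomial (Fin n) ℝ := fun a => MvPolynomial.pderiv a.2 (F a.1)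

lemma eval_NP_grad {n : ℕ} {ι : Type} [Fintype ι] (F : ι → MvPolynomial (Fin n) ℝ)
    (x : Fin n → ℝ) : MvPolynomial.eval x (NP (grad F)) =
      ∑ i, ∑ j, MvPolynomial.eval x (MvPolynomial.pderiv j (F i)) ^ 2 := by
  rw [eval_NP, Fintype.sum_prod_type]; rfl

/-- Squared norm of the gradient of `p`. -/
noncomputable def gsq {n : ℕ} (p : MvPolynomial (Fin n) ℝ) : MvPolynomial (Fin n) ℝ :=
  ∑ j, MvPolynomial.pderiv j p ^ 2

lemma NP_grad {n : ℕ} {ι : Type} [Fintype ι] (F : ι → MvPolynomial (Fin n) ℝ) :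
    NP (grad F) = ∑ i, gsq (F i) := by
  rw [NP, Fintype.sum_prod_type]; rfl

lemma totalDegree_grad {n k : ℕ} {ι : Type} {F : ι → MvPolynomial (Fin n) ℝ}
    (h : ∀ i, (F i).totalDegree ≤ k) (a : ι × Fin n) : (grad F a).totalDegree ≤ k - 1 :=
  totalDegree_pderiv_le (h a.1) a.2

section prodmeas
variable {n : ℕ}

lemma allLp_fst (p : MvPolynomial (Fin n) ℝ) :
    AllLp ((gam n).prod (gam n)) (fun z => MvPolynomial.eval z.1 p) :=
  (allLp_eval p).comp_mp measurePreserving_fst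

lemma allLp_snd (p : MvPolynomial (Fin n) ℝ) :
    AllLp ((gam n).prod (gam n)) (fun z => MvPolynomial.eval z.2 p) :=
  (allLp_eval p).comp_mp measurePreserving_snd

lemma allLp_dd (p : MvPolynomial (Fin n) ℝ) : AllLp ((gam n).prod (gam n)) (dd p) := by
  refine AllLp.sum _ fun j _ => AllLp.mul ?_ (allLp_fst _)
  simpa using allLp_snd (MvPolynomial.X j)

lemma integral_cx (p : MvPolynomial (Fin n) ℝ) (t : ℝ) :
    ∫ z, MvPolynomial.eval (cx t z) p ∂((gam n).prod (gam n)) = Ex p := by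
  have h := cx_mp (n := n) t
  rw [Ex]
  conv_rhs => rw [← h.map_eq]
  rw [integral_map h.measurable.aemeasurable]
  exact (MvPolynomial.continuous_eval p).aestronglyMeasurable

lemma integral_dd_sq (p : MvPolynomial (Fin n) ℝ) :
    ∫ z, dd p z ^ 2 ∂((gam n).prod (gam n)) = Ex (gsq p) := by
  rw [integral_prod _ (allLp_dd p).sq.integrable, Ex]
  refine integral_congr_ae (Filter.Eventually.of_forall fun x => ?_)
  simp only [dd]
  rw [integral_linear_sq]
  simp [gsq]

lemma integral_dd_rot_sq (p : MvPolynomial (Fin n) ℝ) (t : ℝ) :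
    ∫ z, dd p (rot t z) ^ 2 ∂((gam n).prod (gam n)) = Ex (gsq p) := by
  have h := rot_mp (n := n) t
  rw [← integral_dd_sq]
  conv_rhs => rw [← h.map_eq]
  rw [integral_map h.measurable.aemeasurable]
  rw [h.map_eq]
  exact (allLp_dd p).sq.integrable.aestronglyMeasurable

lemma sq_sum_le {m : ℕ} (a : Fin m → ℝ) : (∑ j, |a j|) ^ 2 ≤ m * ∑ j, a j ^ 2 := by
  have := sq_sum_le_card_mul_sum_sq (s := Finset.univ) (f := fun j => |a j|)
  simpa using this

/-- Poincaré inequality for polynomials. The difference `p y - p x` is the integral of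
`dd p (rot t z)` over the quarter circle, which is controlled by the values at the nodes of
`trig_nodes`; at every node `dd p (rot t z)` has second moment `Ex (gsq p)`. -/
lemma poincare_scalar (k : ℕ) : ∃ C : ℝ, 0 < C ∧ ∀ (n : ℕ) (p : MvPolynomial (Fin n) ℝ),
    p.totalDegree ≤ k → Ex (p ^ 2) - Ex p ^ 2 ≤ C * Ex (gsq p) := by
  obtain ⟨C, hC, m, hm, s, hs, H⟩ := trig_nodes k (2 * k + 1)
  have hpi := Real.pi_pos
  refine ⟨(Real.pi / 2 * C) ^ 2 * (m * m) / 2, by positivity, fun n p hp => ?_⟩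
  have hpt : ∀ z : (Fin n → ℝ) × (Fin n → ℝ),
      (MvPolynomial.eval z.2 p - MvPolynomial.eval z.1 p) ^ 2 ≤
        (Real.pi / 2 * C) ^ 2 * m * ∑ j, dd p (rot (s j) z) ^ 2 := by
    intro z
    have hT : Tr k (2 * k + 1) (fun t => dd p (rot t z)) :=
      (tr_circle hp z).deriv fun t => hasDerivAt_circle p z t
    have h1 := (H _ hT).1
    have h2 := Convex.norm_image_sub_le_of_norm_hasDerivWithin_le
      (f := fun t => MvPolynomial.eval (cx t z) p) (f' := fun t => dd p (rot t z))
      (s := Icc 0 (Real.pi / 2)) (x := 0) (y := Real.pi / 2)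
      (C := C * ∑ j, |dd p (rot (s j) z)|)
      (fun t _ => (hasDerivAt_circle p z t).hasDerivWithinAt) h1 (convex_Icc _ _)
      ⟨le_rfl, by positivity⟩ ⟨by positivity, le_rfl⟩
    simp only [cx, Real.cos_zero, Real.sin_zero, Real.cos_pi_div_two, Real.sin_pi_div_two,
      one_smul, zero_smul, zero_add, add_zero, sub_zero, Real.norm_eq_abs] at h2
    rw [abs_of_pos (by positivity : 0 < Real.pi / 2)] at h2
    calc _ = |MvPolynomial.eval z.2 p - MvPolynomial.eval z.1 p| ^ 2 := (sq_abs _).symm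
      _ ≤ (C * (∑ j, |dd p (rot (s j) z)|) * (Real.pi / 2)) ^ 2 := by gcongr
      _ = (Real.pi / 2 * C) ^ 2 * (∑ j, |dd p (rot (s j) z)|) ^ 2 := by ring
      _ ≤ (Real.pi / 2 * C) ^ 2 * (m * ∑ j, dd p (rot (s j) z) ^ 2) := by
          gcongr; exact sq_sum_le _
      _ = _ := by ring
  have hI : ∀ j, Integrable (fun z => dd p (rot (s j) z) ^ 2) ((gam n).prod (gam n)) :=
    fun j => ((allLp_dd p).comp_mp (rot_mp (s j))).sq.integrable
  have h3 := integral_mono (μ := (gam n).prod (gam n))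
    (((allLp_snd p).sub (allLp_fst p)).sq.integrable)
    ((integrable_finsetSum _ fun j _ => hI j).const_mul ((Real.pi / 2 * C) ^ 2 * m)) hpt
  rw [integral_const_mul, integral_finsetSum _ fun j _ => hI j] at h3
  simp only [integral_dd_rot_sq, Finset.sum_const, Finset.card_univ, Fintype.card_fin,
    nsmul_eq_mul] at h3
  have h4 : ∫ z, (MvPolynomial.eval z.2 p - MvPolynomial.eval z.1 p) ^ 2 ∂((gam n).prod (gam n))
      = 2 * (Ex (p ^ 2) - Ex p ^ 2) := by
    have e : ∀ z : (Fin n → ℝ) × (Fin n → ℝ),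
      (MvPolynomial.eval z.2 p - MvPolynomial.eval z.1 p) ^ 2 =
      MvPolynomial.eval z.2 (p ^ 2) + MvPolynomial.eval z.1 (p ^ 2)
        - 2 * (MvPolynomial.eval z.1 p * MvPolynomial.eval z.2 p) := fun z => by
      simp only [map_pow]; ring
    simp only [e]
    rw [integral_sub ((allLp_snd _).add (allLp_fst _)).integrable
      (((allLp_fst _).mul (allLp_snd _)).integrable.const_mul 2),
      integral_add (allLp_snd _).integrable (allLp_fst _).integrable, integral_const_mul,
      integral_prod_mul (fun x => MvPolynomial.eval x p) (fun x => MvPolynomial.eval x p),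
      integral_fun_fst (fun x => MvPolynomial.eval x (p ^ 2)),
      integral_fun_snd (fun x => MvPolynomial.eval x (p ^ 2))]
    simp only [probReal_univ, one_smul, Ex]
    ring
  rw [h4] at h3
  have e5 : (Real.pi / 2 * C) ^ 2 * (↑m * ↑m) / 2 * Ex (gsq p) =
    (Real.pi / 2 * C) ^ 2 * ↑m * (↑m * Ex (gsq p)) / 2 := by ring
  rw [e5]; linarith

/-- Reverse Poincaré inequality for polynomials of bounded degree: `dd p z` is the derivative at
`t = 0` along the circle, and `trig_nodes` bounds it by values of `p` on the circle. -/
lemma rev_poincare_scalar (k : ℕ) : ∃ C : ℝ, 0 < C ∧ ∀ (n : ℕ) (p : MvPolynomial (Fin n) ℝ),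
    p.totalDegree ≤ k → Ex (gsq p) ≤ C * Ex (p ^ 2) := by
  obtain ⟨C, hC, m, hm, s, hs, H⟩ := trig_nodes k (2 * k)
  refine ⟨C ^ 2 * (m * m), by positivity, fun n p hp => ?_⟩
  have hpt : ∀ z : (Fin n → ℝ) × (Fin n → ℝ),
      dd p z ^ 2 ≤ C ^ 2 * m * ∑ j, MvPolynomial.eval (cx (s j) z) (p ^ 2) := by
    intro z
    have h1 := (H _ (tr_circle hp z)).2 _ (hasDerivAt_circle p z 0)
    have e : rot 0 z = z := by simp [rot, cx, cy]
    rw [e] at h1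
    calc _ = |dd p z| ^ 2 := (sq_abs _).symm
      _ ≤ (C * ∑ j, |MvPolynomial.eval (cx (s j) z) p|) ^ 2 := by gcongr
      _ = C ^ 2 * (∑ j, |MvPolynomial.eval (cx (s j) z) p|) ^ 2 := by ring
      _ ≤ C ^ 2 * (m * ∑ j, MvPolynomial.eval (cx (s j) z) p ^ 2) := by
          gcongr; exact sq_sum_le _
      _ = _ := by simp only [map_pow]; ring
  have hI : ∀ j, Integrable (fun z => MvPolynomial.eval (cx (s j) z) (p ^ 2))
      ((gam n).prod (gam n)) :=
    fun j => ((allLp_eval (p ^ 2)).comp_mp (cx_mp (s j))).integrable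
  have h3 := integral_mono (μ := (gam n).prod (gam n)) (allLp_dd p).sq.integrable
    ((integrable_finsetSum _ fun j _ => hI j).const_mul (C ^ 2 * m)) hpt
  rw [integral_const_mul, integral_finsetSum _ fun j _ => hI j, integral_dd_sq] at h3
  simp only [integral_cx, Finset.sum_const, Finset.card_univ, Fintype.card_fin,
    nsmul_eq_mul] at h3
  linarith

end prodmeas

end GaussPoly

/-! ### Reverse Hölder inequality and large directional derivatives -/

namespace GaussPoly
open Set

lemma poincare (k : ℕ) : ∃ C : ℝ, 0 < C ∧ ∀ (n : ℕ) (ι : Type) [Fintype ι]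
    (F : ι → MvPolynomial (Fin n) ℝ), (∀ i, (F i).totalDegree ≤ k) →
      Ex (NP fun i => F i - MvPolynomial.C (Ex (F i))) ≤ C * Ex (NP (grad F)) := by
  obtain ⟨C, hC, H⟩ := poincare_scalar k
  refine ⟨C, hC, fun n ι _ F hF => ?_⟩
  rw [NP_grad, NP, Ex_sum, Ex_sum, Finset.mul_sum]
  refine Finset.sum_le_sum fun i _ => ?_
  refine le_trans (le_of_eq ?_) (H n (F i) (hF i))
  have e : (F i - MvPolynomial.C (Ex (F i))) ^ 2 = F i ^ 2 -
      MvPolynomial.C (2 * Ex (F i)) * F i + MvPolynomial.C (Ex (F i) ^ 2) := by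
    simp only [map_mul, map_pow, map_ofNat]; ring
  rw [e, Ex_add, Ex_sub, Ex_C_mul, Ex_C]
  ring

lemma rev_poincare (k : ℕ) : ∃ C : ℝ, 0 < C ∧ ∀ (n : ℕ) (ι : Type) [Fintype ι]
    (F : ι → MvPolynomial (Fin n) ℝ), (∀ i, (F i).totalDegree ≤ k) →
      Ex (NP (grad F)) ≤ C * Ex (NP F) := by
  obtain ⟨C, hC, H⟩ := rev_poincare_scalar k
  refine ⟨C, hC, fun n ι _ F hF => ?_⟩
  rw [NP_grad, NP, Ex_sum, Ex_sum, Finset.mul_sum]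
  exact Finset.sum_le_sum fun i _ => H n (F i) (hF i)

/-- Cauchy–Schwarz inequality. -/
lemma Ex_mul_sq_le {n : ℕ} (p q : MvPolynomial (Fin n) ℝ) :
    Ex (p * q) ^ 2 ≤ Ex (p ^ 2) * Ex (q ^ 2) := by
  have h : ∀ t : ℝ, 0 ≤ Ex (q ^ 2) * (t * t) + 2 * Ex (p * q) * t + Ex (p ^ 2) := fun t => by
    have h1 : 0 ≤ Ex ((p + MvPolynomial.C t * q) ^ 2) :=
      Ex_nonneg fun x => by rw [map_pow]; positivity
    have e : (p + MvPolynomial.C t * q) ^ 2 = MvPolynomial.C (t * t) * q ^ 2 +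
        MvPolynomial.C (2 * t) * (p * q) + p ^ 2 := by
      simp only [map_mul, map_ofNat]; ring
    rw [e, Ex_add, Ex_add, Ex_C_mul, Ex_C_mul] at h1
    linarith
  have := discrim_le_zero h
  rw [discrim] at this
  nlinarith

lemma eval_gsq_NP_le {n : ℕ} {ι : Type} [Fintype ι] (G : ι → MvPolynomial (Fin n) ℝ)
    (x : Fin n → ℝ) : MvPolynomial.eval x (gsq (NP G)) ≤
      4 * (MvPolynomial.eval x (NP G) * MvPolynomial.eval x (NP (grad G))) := by
  rw [eval_NP_grad, Finset.sum_comm, Finset.mul_sum, Finset.mul_sum, gsq, map_sum]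
  refine Finset.sum_le_sum fun j _ => ?_
  have e : MvPolynomial.eval x (MvPolynomial.pderiv j (NP G)) =
      2 * ∑ i, MvPolynomial.eval x (G i) * MvPolynomial.eval x (MvPolynomial.pderiv j (G i)) := by
    rw [NP, map_sum, map_sum, Finset.mul_sum]
    refine Finset.sum_congr rfl fun i _ => ?_
    rw [sq, MvPolynomial.pderiv_mul]
    simp only [map_add, map_mul]; ring
  rw [map_pow, e, mul_pow, eval_NP]
  have := Finset.sum_mul_sq_le_sq_mul_sq Finset.univ (fun i => MvPolynomial.eval x (G i))
    (fun i => MvPolynomial.eval x (MvPolynomial.pderiv j (G i)))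
  linarith

/-- Reverse Hölder inequality, by induction on the degree. The Poincaré inequality for `NP G`
together with `|∇ NP G|² ≤ 4 (NP G) (NP (grad G))` bounds the variance of `NP G` by
`Ex (NP G ^ 2) / 2` plus a multiple of `Ex (NP (grad G) ^ 2)`; the gradient has smaller degree, and
its second moment is controlled by the reverse Poincaré inequality. -/
lemma hyper (k : ℕ) : ∃ C : ℝ, 0 < C ∧ ∀ (n : ℕ) (ι : Type) [Fintype ι]
    (G : ι → MvPolynomial (Fin n) ℝ), (∀ i, (G i).totalDegree ≤ k) →
      Ex (NP G ^ 2) ≤ C * Ex (NP G) ^ 2 := by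
  induction k with
  | zero =>
    refine ⟨1, one_pos, fun n ι _ G hG => ?_⟩
    have h : NP G = MvPolynomial.C (∑ i, (G i).coeff 0 ^ 2) := by
      rw [NP, map_sum]
      refine Finset.sum_congr rfl fun i _ => ?_
      conv_lhs => rw [MvPolynomial.totalDegree_eq_zero_iff_eq_C.1 (Nat.le_zero.1 (hG i))]
      rw [map_pow]
    rw [h, ← map_pow, Ex_C, Ex_C, one_mul]
  | succ k ih =>
    obtain ⟨A, hA, HA⟩ := ih
    obtain ⟨Cp, hCp, HP⟩ := poincare_scalar (2 * (k + 1))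
    obtain ⟨Cr, hCr, HR⟩ := rev_poincare (k + 1)
    refine ⟨2 + 16 * Cp ^ 2 * A * Cr ^ 2, by positivity, fun n ι _ G hG => ?_⟩
    have h1 := HP n (NP G) (totalDegree_NP hG)
    have h2 := HA n _ (grad G) (fun a => totalDegree_grad hG a)
    have h3 := HR n ι G hG
    have h4 : Cp * Ex (gsq (NP G)) ≤ 1 / 2 * Ex (NP G ^ 2) + 8 * Cp ^ 2 * Ex (NP (grad G) ^ 2) := by
      rw [← Ex_C_mul, ← Ex_C_mul, ← Ex_C_mul, ← Ex_add]
      refine Ex_mono fun x => ?_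
      simp only [map_mul, map_add, map_pow, MvPolynomial.eval_C]
      have h5 := mul_le_mul_of_nonneg_left (eval_gsq_NP_le G x) hCp.le
      nlinarith [sq_nonneg (MvPolynomial.eval x (NP G) -
        4 * Cp * MvPolynomial.eval x (NP (grad G)))]
    have h5 : Ex (NP (grad G)) ^ 2 ≤ (Cr * Ex (NP G)) ^ 2 := by
      have := Ex_NP_nonneg (grad G)
      gcongr
    have h6 : 8 * Cp ^ 2 * Ex (NP (grad G) ^ 2) ≤ 8 * Cp ^ 2 * (A * (Cr * Ex (NP G)) ^ 2) := by
      gcongr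
      exact h2.trans (by gcongr)
    nlinarith

/-- For a random direction `y`, the derivative of `F` at `x` in the direction `y` is comparable to
the full gradient with probability bounded below. This is the Paley–Zygmund inequality, the fourth
moment being controlled by `hyper 1`. -/
lemma small_ball_dir : ∃ c : ℝ, 0 < c ∧ ∀ (n : ℕ) (ι : Type) [Fintype ι]
    (F : ι → MvPolynomial (Fin n) ℝ) (x : Fin n → ℝ),
      ENNReal.ofReal c ≤ gam n {y | MvPolynomial.eval x (NP (grad F)) / 2 ≤
        ∑ i, dd (F i) (x, y) ^ 2} := by
  obtain ⟨C, hC, H⟩ := hyper 1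
  refine ⟨1 / (4 * (C + 1)), by positivity, fun n ι _ F x => ?_⟩
  let L : ι → MvPolynomial (Fin n) ℝ := fun i => ∑ j, MvPolynomial.X j *
    MvPolynomial.C (MvPolynomial.eval x (MvPolynomial.pderiv j (F i)))
  have hLdeg : ∀ i, (L i).totalDegree ≤ 1 := fun i =>
    MvPolynomial.totalDegree_finsetSum_le fun j _ => by
      refine (MvPolynomial.totalDegree_mul _ _).trans ?_
      simp
  have hLe : ∀ y, MvPolynomial.eval y (NP L) = ∑ i, dd (F i) (x, y) ^ 2 := fun y => by
    simp [eval_NP, L, dd]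
  set a := MvPolynomial.eval x (NP (grad F)) with ha
  have hEx : Ex (NP L) = a := by
    rw [ha, eval_NP_grad, NP, Ex_sum]
    refine Finset.sum_congr rfl fun i _ => ?_
    rw [← integral_linear_sq]
    simp [Ex, L]
  have ha0 : 0 ≤ a := eval_NP_nonneg _ _
  simp only [← hLe]
  rcases ha0.eq_or_lt with h0 | hpos
  · have : {y | a / 2 ≤ MvPolynomial.eval y (NP L)} = univ := by
      rw [← h0, eq_univ_iff_forall]
      intro y
      simpa using eval_NP_nonneg L y
    rw [this, measure_univ, ← ENNReal.ofReal_one]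
    apply ENNReal.ofReal_le_ofReal
    rw [div_le_one (by positivity)]; linarith
  set A : Set (Fin n → ℝ) := {y | a / 2 ≤ MvPolynomial.eval y (NP L)} with hA
  have hAm : MeasurableSet A :=
    (isClosed_le continuous_const (MvPolynomial.continuous_eval _)).measurableSet
  have hH := H n ι L hLdeg
  rw [hEx] at hH
  -- Paley–Zygmund in pointwise form: the weights balance the two moments of `NP L`
  have hpt : ∀ y, MvPolynomial.eval y (NP L) ≤ (a / 2 + 1 / (4 * (C + 1) * a) *
      MvPolynomial.eval y (NP L ^ 2)) + A.indicator (fun _ => (C + 1) * a) y := fun y => by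
    have hS := eval_NP_nonneg L y
    set S := MvPolynomial.eval y (NP L) with hSdef
    rw [map_pow, ← hSdef]
    by_cases hy : y ∈ A
    · rw [indicator_of_mem hy]
      have : S ≤ 1 / (4 * (C + 1) * a) * S ^ 2 + (C + 1) * a := by
        have h1 : 0 < (C + 1) * a := by positivity
        have e : 1 / (4 * (C + 1) * a) * S ^ 2 + (C + 1) * a - S =
            (S - 2 * ((C + 1) * a)) ^ 2 / (4 * ((C + 1) * a)) := by
          field_simp; ring
        have : 0 ≤ (S - 2 * ((C + 1) * a)) ^ 2 / (4 * ((C + 1) * a)) := by positivity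
        linarith
      linarith
    · rw [indicator_of_notMem hy]
      have h1 : S < a / 2 := not_le.1 hy
      have : 0 ≤ 1 / (4 * (C + 1) * a) * S ^ 2 := by positivity
      linarith
  have hI2 : Integrable (A.indicator fun _ => (C + 1) * a) (gam n) :=
    (integrable_const _).indicator hAm
  have hI1 : Integrable (fun y => 1 / (4 * (C + 1) * a) *
      MvPolynomial.eval y (NP L ^ 2)) (gam n) := (integrable_eval _).const_mul _
  have hI3 : Integrable (fun y => a / 2 + 1 / (4 * (C + 1) * a) *
      MvPolynomial.eval y (NP L ^ 2)) (gam n) := (integrable_const _).add hI1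
  have h1 := integral_mono (integrable_eval (NP L)) (hI3.add hI2) hpt
  simp only [Pi.add_apply] at h1
  rw [integral_add hI3 hI2,
    integral_add (integrable_const (a / 2)) hI1, integral_const_mul, integral_indicator hAm] at h1
  simp only [integral_const, probReal_univ, one_mul, smul_eq_mul, measureReal_restrict_apply_univ]
    at h1
  change Ex (NP L) ≤ a / 2 + 1 / (4 * (C + 1) * a) * Ex (NP L ^ 2) + _ at h1
  rw [hEx] at h1
  have h2 : 1 / (4 * (C + 1) * a) * Ex (NP L ^ 2) ≤ a / 4 := by
    calc _ ≤ 1 / (4 * (C + 1) * a) * (C * a ^ 2) := by gcongr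
      _ ≤ 1 / (4 * (C + 1) * a) * ((C + 1) * a ^ 2) := by gcongr; linarith
      _ = _ := by field_simp
  have h3 : 1 / (4 * (C + 1)) ≤ (gam n).real A := by
    rw [div_le_iff₀ (by positivity)]
    have h4 : a * 1 ≤ a * ((gam n).real A * (4 * (C + 1))) := by linarith
    exact le_of_mul_le_mul_left h4 hpos
  exact ENNReal.ofReal_le_of_le_toReal h3

end GaussPoly

/-! ### Averaging over rotations -/

namespace GaussPoly
open Set

lemma measurable_rot_uncurry {n : ℕ} :
    Measurable (fun p : ℝ × ((Fin n → ℝ) × (Fin n → ℝ)) => rot p.1 p.2) := by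
  unfold rot cx cy
  apply Continuous.measurable
  fun_prop

lemma measurable_eval {n : ℕ} (p : MvPolynomial (Fin n) ℝ) :
    Measurable (fun x => MvPolynomial.eval x p) := (MvPolynomial.continuous_eval p).measurable

lemma measurable_dd {n : ℕ} (p : MvPolynomial (Fin n) ℝ) : Measurable (dd p) := by
  unfold dd
  refine Finset.measurable_sum _ fun j _ => ?_
  exact ((measurable_pi_apply j).comp measurable_snd).mul ((measurable_eval _).comp measurable_fst)

/-- The law of a pair of independent Gaussian vectors may be averaged over rotations. -/
lemma lintegral_rot_average {n : ℕ} {f : (Fin n → ℝ) × (Fin n → ℝ) → ENNReal}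
    (hf : Measurable f) :
    ENNReal.ofReal (Real.pi / 2) * ∫⁻ z, f z ∂((gam n).prod (gam n)) =
      ∫⁻ z, (∫⁻ t in Icc (0 : ℝ) (Real.pi / 2), f (rot t z)) ∂((gam n).prod (gam n)) := by
  rw [← lintegral_lintegral_swap
    (f := fun (t : ℝ) (z : (Fin n → ℝ) × (Fin n → ℝ)) => f (rot t z))]
  · have : ∀ t : ℝ, ∫⁻ z, f (rot t z) ∂((gam n).prod (gam n)) =
        ∫⁻ z, f z ∂((gam n).prod (gam n)) := fun t => (rot_mp t).lintegral_comp hf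
    simp only [this, lintegral_const]
    simp [mul_comm]
  · exact (hf.comp measurable_rot_uncurry).aemeasurable

lemma integral_rot_average {n : ℕ} {f : (Fin n → ℝ) × (Fin n → ℝ) → ℝ} {B : ℝ}
    (hf : Measurable f) (hB : ∀ z, |f z| ≤ B) :
    (Real.pi / 2) * ∫ z, f z ∂((gam n).prod (gam n)) =
      ∫ z, (∫ t in (0 : ℝ)..(Real.pi / 2), f (rot t z)) ∂((gam n).prod (gam n)) := by
  have hpi := Real.pi_pos
  simp only [intervalIntegral.integral_of_le (show (0:ℝ) ≤ Real.pi / 2 by positivity)]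
  rw [← integral_integral_swap
    (f := fun (t : ℝ) (z : (Fin n → ℝ) × (Fin n → ℝ)) => f (rot t z))]
  · have : ∀ t : ℝ, ∫ z, f (rot t z) ∂((gam n).prod (gam n)) =
        ∫ z, f z ∂((gam n).prod (gam n)) := fun t => by
      conv_rhs => rw [← (rot_mp (n := n) t).map_eq]
      rw [integral_map (rot_mp t).measurable.aemeasurable hf.aestronglyMeasurable]
    simp only [this, integral_const]
    simp only [measureReal_restrict_apply_univ, Real.volume_real_Ioc, smul_eq_mul, sub_zero]
    rw [max_eq_left (by positivity)]
  · refine Integrable.of_bound (hf.comp measurable_rot_uncurry).aestronglyMeasurable B ?_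
    exact Filter.Eventually.of_forall fun p => hB _

/-- The integral over `A` of the positive part of `W` against the standard Gaussian measure; it is
used only for `W = NP G`, which is non-negative. -/
noncomputable def mass {n : ℕ} (A : Set (Fin n → ℝ)) (W : MvPolynomial (Fin n) ℝ) : ENNReal :=
  ∫⁻ x in A, ENNReal.ofReal (MvPolynomial.eval x W) ∂(gam n)

lemma mass_mono {n : ℕ} {A B : Set (Fin n → ℝ)} (h : A ⊆ B) (W : MvPolynomial (Fin n) ℝ) :
    mass A W ≤ mass B W := lintegral_mono_set h

lemma mass_le_Ex {n : ℕ} {κ : Type} [Fintype κ] (A : Set (Fin n → ℝ))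
    (G : κ → MvPolynomial (Fin n) ℝ) : mass A (NP G) ≤ ENNReal.ofReal (Ex (NP G)) := by
  rw [Ex, ofReal_integral_eq_lintegral_ofReal (integrable_eval _)
    (Filter.Eventually.of_forall fun x => eval_NP_nonneg G x)]
  exact setLIntegral_le_lintegral _ _

lemma lintegral_cx {n : ℕ} {κ : Type} [Fintype κ] (G : κ → MvPolynomial (Fin n) ℝ) (t : ℝ) :
    ∫⁻ z, ENNReal.ofReal (MvPolynomial.eval (cx t z) (NP G)) ∂((gam n).prod (gam n)) =
      ENNReal.ofReal (Ex (NP G)) := by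
  rw [Ex, ofReal_integral_eq_lintegral_ofReal (integrable_eval _)
    (Filter.Eventually.of_forall fun x => eval_NP_nonneg G x)]
  exact (cx_mp t).lintegral_comp (measurable_eval _).ennreal_ofReal

/-- One step of the small ball induction: where `|F| < s`, either the gradient is below `δ`, or, for a
random direction, the directional derivative is of order `δ`, and then `slab` bounds the
corresponding part of every circle by `O(s / δ)`. The weight `NP G` is estimated along the circle by
its values at the nodes of `trig_nodes`. -/
lemma step (k K : ℕ) : ∃ C : ℝ, 0 < C ∧ ∀ (n : ℕ) (ι : Type) [Fintype ι]
    (F : ι → MvPolynomial (Fin n) ℝ) (κ : Type) [Fintype κ] (G : κ → MvPolynomial (Fin n) ℝ),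
    (∀ i, (F i).totalDegree ≤ k) → (∀ i, (G i).totalDegree ≤ K) → ∀ s δ : ℝ, 0 ≤ s → 0 < δ →
    mass {x | MvPolynomial.eval x (NP F) < s ^ 2} (NP G) ≤
      ENNReal.ofReal (C * (s / δ) * Ex (NP G)) +
        mass {x | MvPolynomial.eval x (NP (grad F)) < δ ^ 2} (NP G) := by
  obtain ⟨c, hc, Hc⟩ := small_ball_dir
  obtain ⟨C1, hC1, Hs⟩ := slab k
  obtain ⟨C2, hC2, m, hm, nd, hnd, Hn⟩ := trig_nodes (2 * K) (2 * (2 * K))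
  have hpi := Real.pi_pos
  refine ⟨C1 * Real.sqrt 2 * (C2 * m) / (c * (Real.pi / 2)), by positivity, ?_⟩
  intro n ι _ F κ _ G hF hG s δ hs hδ
  set A := {x | MvPolynomial.eval x (NP F) < s ^ 2} with hA
  set B := {x | MvPolynomial.eval x (NP (grad F)) < δ ^ 2} with hB
  have hAm : MeasurableSet A := measurableSet_lt (measurable_eval _) measurable_const
  have hBm : MeasurableSet B := measurableSet_lt (measurable_eval _) measurable_const
  have h1 : mass A (NP G) ≤ mass (A ∩ Bᶜ) (NP G) + mass B (NP G) := by
    refine le_trans (mass_mono (B := (A ∩ Bᶜ) ∪ B) ?_ _) (lintegral_union_le _ _ _)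
    intro x hx
    by_cases hxB : x ∈ B
    · exact Or.inr hxB
    · exact Or.inl ⟨hx, hxB⟩
  refine h1.trans ?_
  gcongr
  set E : Set ((Fin n → ℝ) × (Fin n → ℝ)) :=
    {z | MvPolynomial.eval z.1 (NP F) < s ^ 2 ∧ (δ / Real.sqrt 2) ^ 2 ≤ ∑ i, dd (F i) z ^ 2} with hE
  have hEm : MeasurableSet E :=
    (measurableSet_lt ((measurable_eval _).comp measurable_fst) measurable_const).inter
      (measurableSet_le measurable_const
        (Finset.measurable_sum _ fun i _ => (measurable_dd _).pow_const 2))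
  have hδ2 : (δ / Real.sqrt 2) ^ 2 = δ ^ 2 / 2 := by
    rw [div_pow, Real.sq_sqrt (by norm_num)]
  set f : (Fin n → ℝ) × (Fin n → ℝ) → ENNReal :=
    E.indicator (fun z => ENNReal.ofReal (MvPolynomial.eval z.1 (NP G))) with hf
  have hfm : Measurable f :=
    ((measurable_eval _).comp measurable_fst).ennreal_ofReal.indicator hEm
  -- insert a random direction in which the derivative is large
  have h2 : ENNReal.ofReal c * mass (A ∩ Bᶜ) (NP G) ≤ ∫⁻ z, f z ∂((gam n).prod (gam n)) := by
    rw [lintegral_prod _ hfm.aemeasurable, mass,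
      ← lintegral_const_mul _ (measurable_eval _).ennreal_ofReal,
      ← lintegral_indicator (hAm.inter hBm.compl)]
    refine lintegral_mono fun x => ?_
    by_cases hx : x ∈ A ∩ Bᶜ
    · rw [indicator_of_mem hx]
      have hx2 : δ ^ 2 ≤ MvPolynomial.eval x (NP (grad F)) := not_lt.1 hx.2
      calc ENNReal.ofReal c * ENNReal.ofReal (MvPolynomial.eval x (NP G))
          ≤ (gam n {y | MvPolynomial.eval x (NP (grad F)) / 2 ≤ ∑ i, dd (F i) (x, y) ^ 2}) *
            ENNReal.ofReal (MvPolynomial.eval x (NP G)) := by gcongr; exact Hc n ι F x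
        _ = ∫⁻ y in {y | MvPolynomial.eval x (NP (grad F)) / 2 ≤ ∑ i, dd (F i) (x, y) ^ 2},
            ENNReal.ofReal (MvPolynomial.eval x (NP G)) ∂(gam n) := by
              rw [setLIntegral_const, mul_comm]
        _ ≤ ∫⁻ y, f (x, y) ∂(gam n) := by
              rw [← lintegral_indicator]
              · refine lintegral_mono fun y => ?_
                by_cases hy : MvPolynomial.eval x (NP (grad F)) / 2 ≤ ∑ i, dd (F i) (x, y) ^ 2
                · rw [indicator_of_mem (by exact hy), hf, indicator_of_mem]
                  refine ⟨hx.1, ?_⟩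
                  rw [hδ2]; linarith
                · rw [indicator_of_notMem (by exact hy)]; exact zero_le
              · exact measurableSet_le measurable_const (Finset.measurable_sum _ fun i _ =>
                  ((measurable_dd _).comp measurable_prodMk_left).pow_const 2)
    · rw [indicator_of_notMem hx]; exact zero_le
  -- average over rotations and estimate each circle separately
  have h3 : ENNReal.ofReal (Real.pi / 2) * ∫⁻ z, f z ∂((gam n).prod (gam n)) ≤
      ENNReal.ofReal (C1 * Real.sqrt 2 * (C2 * m) * (s / δ) * Ex (NP G)) := by
    rw [lintegral_rot_average hfm]
    have hpt : ∀ z : (Fin n → ℝ) × (Fin n → ℝ),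
        ∫⁻ t in Icc (0 : ℝ) (Real.pi / 2), f (rot t z) ≤
          ENNReal.ofReal (C1 * (s / (δ / Real.sqrt 2)) * C2) *
            ∑ j, ENNReal.ofReal (MvPolynomial.eval (cx (nd j) z) (NP G)) := by
      intro z
      have hT : Tr (2 * K) (2 * (2 * K)) (fun t => MvPolynomial.eval (cx t z) (NP G)) :=
        tr_circle (totalDegree_NP hG) z
      have hN := (Hn _ hT).1
      set M := C2 * ∑ j, |MvPolynomial.eval (cx (nd j) z) (NP G)| with hM
      set D := {t ∈ Icc (0 : ℝ) (Real.pi / 2) |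
        ∑ i, MvPolynomial.eval (cx t z) (F i) ^ 2 < s ^ 2 ∧
        (δ / Real.sqrt 2) ^ 2 ≤ ∑ i, dd (F i) (rot t z) ^ 2} with hD
      have hvol : volume D ≤ ENNReal.ofReal (C1 * (s / (δ / Real.sqrt 2))) :=
        Hs ι (fun i t => MvPolynomial.eval (cx t z) (F i)) (fun i t => dd (F i) (rot t z))
          (fun i => tr_circle (hF i) z) (fun i t => hasDerivAt_circle (F i) z t) s _ hs
          (by positivity)
      have hDm : MeasurableSet D := by
        have : D = Icc (0 : ℝ) (Real.pi / 2) ∩ {t | rot t z ∈ E} := by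
          ext t; simp [hD, hE, rot, eval_NP]
        rw [this]
        exact measurableSet_Icc.inter
          ((measurable_rot_uncurry.comp measurable_prodMk_right) hEm)
      calc ∫⁻ t in Icc (0 : ℝ) (Real.pi / 2), f (rot t z)
          ≤ ∫⁻ t in Icc (0 : ℝ) (Real.pi / 2), D.indicator (fun _ => ENNReal.ofReal M) t := by
            refine setLIntegral_mono' measurableSet_Icc fun t ht => ?_
            by_cases h : rot t z ∈ E
            · have htD : t ∈ D := by
                refine ⟨ht, ?_, h.2⟩
                rw [← eval_NP]; exact h.1
              rw [hf, indicator_of_mem h, indicator_of_mem htD]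
              exact ENNReal.ofReal_le_ofReal ((le_abs_self _).trans (hN t ht))
            · rw [hf, indicator_of_notMem h]; exact zero_le
        _ ≤ ∫⁻ t, D.indicator (fun _ => ENNReal.ofReal M) t := setLIntegral_le_lintegral _ _
        _ = ENNReal.ofReal M * volume D := by rw [lintegral_indicator hDm, setLIntegral_const]
        _ ≤ ENNReal.ofReal M * ENNReal.ofReal (C1 * (s / (δ / Real.sqrt 2))) := by gcongr
        _ = _ := by
            rw [ENNReal.ofReal_mul (q := C2) (by positivity), hM, ENNReal.ofReal_mul hC2.le,
              ENNReal.ofReal_sum_of_nonneg (fun _ _ => abs_nonneg _)]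
            simp only [abs_of_nonneg (eval_NP_nonneg G _)]
            ring
    refine (lintegral_mono hpt).trans ?_
    have hmz : ∀ j, Measurable fun z : (Fin n → ℝ) × (Fin n → ℝ) =>
        ENNReal.ofReal (MvPolynomial.eval (cx (nd j) z) (NP G)) := fun j =>
      ((measurable_eval _).comp (cx_mp (nd j)).measurable).ennreal_ofReal
    rw [lintegral_const_mul _ (Finset.measurable_sum _ fun j _ => hmz j),
      lintegral_finsetSum _ (fun j _ => hmz j)]
    simp only [lintegral_cx, Finset.sum_const, Finset.card_univ, Fintype.card_fin, nsmul_eq_mul]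
    rw [← ENNReal.ofReal_natCast, ← ENNReal.ofReal_mul (by positivity),
      ← ENNReal.ofReal_mul (by positivity)]
    apply le_of_eq
    congr 1
    field_simp
  have h4 : ENNReal.ofReal (c * (Real.pi / 2)) * mass (A ∩ Bᶜ) (NP G) ≤
      ENNReal.ofReal (C1 * Real.sqrt 2 * (C2 * m) * (s / δ) * Ex (NP G)) := by
    rw [mul_comm c, ENNReal.ofReal_mul (by positivity), mul_assoc]
    exact (mul_le_mul_right h2 _).trans h3
  have h5 : mass (A ∩ Bᶜ) (NP G) ≤
      ENNReal.ofReal (C1 * Real.sqrt 2 * (C2 * m) * (s / δ) * Ex (NP G)) /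
        ENNReal.ofReal (c * (Real.pi / 2)) := by
    rw [ENNReal.le_div_iff_mul_le (Or.inl (by simpa using by positivity)) (Or.inl (by simp)),
      mul_comm]
    exact h4
  refine h5.trans (le_of_eq ?_)
  rw [← ENNReal.ofReal_div_of_pos (by positivity)]
  congr 1
  ring

end GaussPoly

/-! ### Small ball estimate -/

namespace GaussPoly
open Set

/-- For constant polynomials the squared norm equals its expectation. -/
lemma small_ball_zero {n : ℕ} {ι : Type} [Fintype ι] {F : ι → MvPolynomial (Fin n) ℝ}
    (hF : ∀ i, (F i).totalDegree ≤ 0) (x : Fin n → ℝ) :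
    MvPolynomial.eval x (NP F) = Ex (NP F) := by
  have h : ∀ i, F i = MvPolynomial.C ((F i).coeff 0) := fun i =>
    MvPolynomial.totalDegree_eq_zero_iff_eq_C.1 (Nat.le_zero.1 (hF i))
  have h2 : NP F = MvPolynomial.C (∑ i, (F i).coeff 0 ^ 2) := by
    rw [NP, map_sum]
    refine Finset.sum_congr rfl fun i _ => ?_
    conv_lhs => rw [h i]
    simp
  rw [h2, Ex_C]; simp

/-- The family of all products `G a * F i`, whose squares sum to `NP G * NP F`. -/
noncomputable def tens {n : ℕ} {ι κ : Type} (G : κ → MvPolynomial (Fin n) ℝ)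
    (F : ι → MvPolynomial (Fin n) ℝ) : κ × ι → MvPolynomial (Fin n) ℝ := fun a => G a.1 * F a.2

lemma NP_tens {n : ℕ} {ι κ : Type} [Fintype ι] [Fintype κ] (G : κ → MvPolynomial (Fin n) ℝ)
    (F : ι → MvPolynomial (Fin n) ℝ) : NP (tens G F) = NP G * NP F := by
  simp only [NP, tens, Fintype.sum_prod_type, mul_pow, Finset.sum_mul_sum]

lemma Ex_tens_le (k K : ℕ) : ∃ C : ℝ, 0 < C ∧ ∀ (n : ℕ) (ι : Type) [Fintype ι]
    (F : ι → MvPolynomial (Fin n) ℝ) (κ : Type) [Fintype κ] (G : κ → MvPolynomial (Fin n) ℝ),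
    (∀ i, (F i).totalDegree ≤ k) → (∀ i, (G i).totalDegree ≤ K) →
    Ex (NP (tens G F)) ≤ C * (Ex (NP G) * Ex (NP F)) := by
  obtain ⟨C1, h1, H1⟩ := hyper k
  obtain ⟨C2, h2, H2⟩ := hyper K
  refine ⟨Real.sqrt (C2 * C1), by positivity, fun n ι _ F κ _ G hF hG => ?_⟩
  have e1 := Ex_NP_nonneg F
  have e2 := Ex_NP_nonneg G
  rw [NP_tens]
  refine (abs_le_of_sq_le_sq' ?_ (by positivity)).2
  calc Ex (NP G * NP F) ^ 2 ≤ Ex (NP G ^ 2) * Ex (NP F ^ 2) := Ex_mul_sq_le _ _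
    _ ≤ (C2 * Ex (NP G) ^ 2) * (C1 * Ex (NP F) ^ 2) := by
      gcongr
      · exact Ex_mono (p := 0) (fun x => by simpa using sq_nonneg _) |>.trans' (by simp [Ex])
      · exact H2 n κ G hG
      · exact H1 n ι F hF
    _ = (C2 * C1) * (Ex (NP G) * Ex (NP F)) ^ 2 := by ring
    _ = _ := by rw [mul_pow, mul_pow, mul_pow, Real.sq_sqrt (by positivity)]

/-- Small ball estimate for vector-valued polynomials of degree at most `k`, uniform in the dimension
and with a polynomial weight `NP G`; without a weight it reads
`P(|F|² < u^{2k} E|F|²) ≤ C u`. The induction on `k` uses `step` and the hypothesis for the gradient.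
This suffices if `E|∇F|²` is at least a constant times `E|F|²`. Otherwise `F` is close to its mean by
the Poincaré inequality, so on the set in question the fluctuation `F - E F` is at least of the order
of `E F`; inserting it as an additional weight gains the missing factor. This is why weights of every
degree `K` have to be carried along. -/
lemma small_ball (k : ℕ) : ∀ K : ℕ, ∃ C : ℝ, 0 < C ∧ ∀ (n : ℕ) (ι : Type) [Fintype ι]
    (F : ι → MvPolynomial (Fin n) ℝ) (κ : Type) [Fintype κ] (G : κ → MvPolynomial (Fin n) ℝ),
    (∀ i, (F i).totalDegree ≤ k) → (∀ i, (G i).totalDegree ≤ K) → ∀ u : ℝ, 0 < u →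
    mass {x | MvPolynomial.eval x (NP F) < Ex (NP F) * u ^ (2 * k)} (NP G) ≤
      ENNReal.ofReal (C * u * Ex (NP G)) := by
  induction k with
  | zero =>
    refine fun K => ⟨1, one_pos, fun n ι _ F κ _ G hF hG u hu => ?_⟩
    have : {x | MvPolynomial.eval x (NP F) < Ex (NP F) * u ^ (2 * 0)} = ∅ := by
      ext x
      simp [small_ball_zero hF]
    rw [this, mass]; simp
  | succ k ih =>
    -- one application of `step`, followed by the induction hypothesis for the gradient
    have key : ∀ K : ℕ, ∃ C : ℝ, 0 < C ∧ ∀ (n : ℕ) (ι : Type) [Fintype ι]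
        (F : ι → MvPolynomial (Fin n) ℝ) (κ : Type) [Fintype κ] (G : κ → MvPolynomial (Fin n) ℝ),
        (∀ i, (F i).totalDegree ≤ k + 1) → (∀ i, (G i).totalDegree ≤ K) → ∀ u T τ : ℝ, 0 < u →
        0 ≤ T → 0 < τ → τ ^ 2 = Ex (NP (grad F)) →
        mass {x | MvPolynomial.eval x (NP F) < T ^ 2 * u ^ (2 * (k + 1))} (NP G) ≤
          ENNReal.ofReal (C * (T / τ + 1) * u * Ex (NP G)) := by
      intro K
      obtain ⟨C1, h1, H1⟩ := step (k + 1) K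
      obtain ⟨C2, h2, H2⟩ := ih K
      refine ⟨C1 + C2, by positivity, fun n ι _ F κ _ G hF hG u T τ hu hT hτ e => ?_⟩
      have hG0 := Ex_NP_nonneg G
      have hg : ∀ i, (grad F i).totalDegree ≤ k := totalDegree_grad hF
      have a1 := H1 n ι F κ G hF hG (T * u ^ (k + 1)) (τ * u ^ k) (by positivity) (by positivity)
      have a2 := H2 n (ι × Fin n) (grad F) κ G hg hG u hu
      rw [← e] at a2
      rw [show (T * u ^ (k + 1)) ^ 2 = T ^ 2 * u ^ (2 * (k + 1)) by ring,
        show (τ * u ^ k) ^ 2 = τ ^ 2 * u ^ (2 * k) by ring] at a1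
      refine a1.trans ((add_le_add le_rfl a2).trans ?_)
      rw [← ENNReal.ofReal_add (by positivity) (by positivity)]
      apply ENNReal.ofReal_le_ofReal
      have e2 : T * u ^ (k + 1) / (τ * u ^ k) = T / τ * u := by
        field_simp; ring
      rw [e2]
      have : 0 ≤ C1 * (u * Ex (NP G)) + C2 * (T / τ * (u * Ex (NP G))) := by positivity
      nlinarith
    intro K
    obtain ⟨CP, hCP, HP⟩ := poincare (k + 1)
    obtain ⟨C1, h1, H1⟩ := key K
    obtain ⟨C2, h2, H2⟩ := key (K + (k + 1))
    obtain ⟨C3, h3, H3⟩ := Ex_tens_le (k + 1) K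
    -- chosen so that `CP * c ≤ 1 / 4`
    set c : ℝ := 1 / (4 * CP + 1) with hc
    have hc0 : 0 < c := by positivity
    have hc1 : c ≤ 1 := by rw [hc, div_le_one (by positivity)]; linarith
    have hcP : CP * c ≤ 1 / 4 := by
      rw [hc, mul_one_div, div_le_iff₀ (by positivity)]; linarith
    refine ⟨C1 * (1 / Real.sqrt c + 1) + 16 + 16 * (C2 * 2 * (C3 * CP)), by positivity, ?_⟩
    intro n ι _ F κ _ G hF hG u hu
    have hG0 := Ex_NP_nonneg G
    set T2 := Ex (NP F) with hT2
    set τ2 := Ex (NP (grad F)) with hτ2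
    have hT0 : 0 ≤ T2 := Ex_NP_nonneg F
    have hτ0 : 0 ≤ τ2 := Ex_NP_nonneg _
    rcases hT0.eq_or_lt with h0 | hTpos
    · have : {x | MvPolynomial.eval x (NP F) < T2 * u ^ (2 * (k + 1))} = ∅ := by
        ext x
        simp [← h0, eval_NP_nonneg]
      rw [this, mass]; simp
    have hTs : 0 < Real.sqrt T2 := Real.sqrt_pos.2 hTpos
    have hTsq : Real.sqrt T2 ^ 2 = T2 := Real.sq_sqrt hT0
    -- all three bounds below are dominated by the final constant
    have fin : ∀ a : ℝ, a ≤ C1 * (1 / Real.sqrt c + 1) + 16 + 16 * (C2 * 2 * (C3 * CP)) →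
        ENNReal.ofReal (a * u * Ex (NP G)) ≤ ENNReal.ofReal
          ((C1 * (1 / Real.sqrt c + 1) + 16 + 16 * (C2 * 2 * (C3 * CP))) * u * Ex (NP G)) :=
      fun a ha => ENNReal.ofReal_le_ofReal (by gcongr)
    have p1 : 0 < C1 * (1 / Real.sqrt c + 1) := by positivity
    have p2 : 0 < 16 * (C2 * 2 * (C3 * CP)) := by positivity
    by_cases hu1 : 1 / 16 ≤ u
    · refine (mass_le_Ex _ _).trans (le_trans ?_ (fin 16 (by linarith)))
      apply ENNReal.ofReal_le_ofReal
      nlinarith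
    push Not at hu1
    by_cases hcase : c * T2 ≤ τ2
    · have hτpos : 0 < τ2 := lt_of_lt_of_le (by positivity) hcase
      have a := H1 n ι F κ G hF hG u (Real.sqrt T2) (Real.sqrt τ2) hu (Real.sqrt_nonneg _)
        (Real.sqrt_pos.2 hτpos) (Real.sq_sqrt hτ0)
      rw [hTsq] at a
      refine a.trans (le_trans ?_ (fin (C1 * (1 / Real.sqrt c + 1)) (by linarith)))
      apply ENNReal.ofReal_le_ofReal
      have : Real.sqrt T2 / Real.sqrt τ2 ≤ 1 / Real.sqrt c := by
        rw [div_le_div_iff₀ (Real.sqrt_pos.2 hτpos) (Real.sqrt_pos.2 hc0), one_mul,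
          ← Real.sqrt_mul hT0]
        apply Real.sqrt_le_sqrt; linarith
      gcongr
    push Not at hcase
    -- the mean of `F` dominates: the fluctuation of `F` is used as an additional weight
    set F0 : ι → MvPolynomial (Fin n) ℝ := fun i => F i - MvPolynomial.C (Ex (F i)) with hF0
    have hF0d : ∀ i, (F0 i).totalDegree ≤ k + 1 := fun i => by
      refine (MvPolynomial.totalDegree_sub _ _).trans (max_le (hF i) ?_)
      simp
    have hP : Ex (NP F0) ≤ CP * τ2 := HP n ι F hF
    have hW := H3 n ι F0 κ G hF0d hG
    have hF00 := Ex_NP_nonneg F0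
    set e2 : ℝ := ∑ i, Ex (F i) ^ 2 with he2
    have hEe : T2 ≤ 2 * Ex (NP F0) + 2 * e2 := by
      have h : Ex (NP F) ≤ Ex (MvPolynomial.C 2 * NP F0 + MvPolynomial.C (2 * e2)) := by
        refine Ex_mono fun x => ?_
        rw [map_add, map_mul, MvPolynomial.eval_C, MvPolynomial.eval_C, eval_NP, eval_NP, he2,
          Finset.mul_sum, Finset.mul_sum, ← Finset.sum_add_distrib]
        refine Finset.sum_le_sum fun i _ => ?_
        simp only [hF0, map_sub, MvPolynomial.eval_C]
        nlinarith [sq_nonneg (MvPolynomial.eval x (F i) - 2 * Ex (F i))]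
      rwa [Ex_add, Ex_C_mul, Ex_C] at h
    have hpe : ∀ x, e2 ≤ 2 * MvPolynomial.eval x (NP F) + 2 * MvPolynomial.eval x (NP F0) := by
      intro x
      rw [eval_NP, eval_NP, he2, Finset.mul_sum, Finset.mul_sum, ← Finset.sum_add_distrib]
      refine Finset.sum_le_sum fun i _ => ?_
      simp only [hF0, map_sub, MvPolynomial.eval_C]
      nlinarith [sq_nonneg (2 * MvPolynomial.eval x (F i) - Ex (F i))]
    have hEN : Ex (NP F0) ≤ T2 / 4 := by nlinarith
    have hu2 : u ^ (2 * (k + 1)) ≤ 1 / 16 :=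
      (pow_le_of_le_one hu.le (by linarith) (by omega)).trans hu1.le
    set A := {x | MvPolynomial.eval x (NP F) < T2 * u ^ (2 * (k + 1))} with hA
    have hAm : MeasurableSet A := measurableSet_lt (measurable_eval _) measurable_const
    -- on `A` the fluctuation satisfies `NP F0 ≥ T2 / 16`
    have hcmp : ENNReal.ofReal (T2 / 16) * mass A (NP G) ≤ mass A (NP (tens G F0)) := by
      rw [mass, mass, ← lintegral_const_mul _ (measurable_eval _).ennreal_ofReal]
      refine setLIntegral_mono' hAm fun x hx => ?_
      rw [← ENNReal.ofReal_mul (by positivity)]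
      apply ENNReal.ofReal_le_ofReal
      rw [NP_tens, map_mul, mul_comm]
      have hx1 : MvPolynomial.eval x (NP F) < T2 * u ^ (2 * (k + 1)) := hx
      have hx2 : T2 * u ^ (2 * (k + 1)) ≤ T2 * (1 / 16) := by gcongr
      have := hpe x
      exact mul_le_mul_of_nonneg_left (by linarith) (eval_NP_nonneg G x)
    have hup : mass A (NP (tens G F0)) ≤
        ENNReal.ofReal (T2 * (C2 * 2 * (C3 * CP)) * u * Ex (NP G)) := by
      rcases hτ0.eq_or_lt with hz | hτpos
      · refine (mass_le_Ex _ _).trans (ENNReal.ofReal_le_ofReal ?_)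
        have : Ex (NP F0) = 0 := le_antisymm (by rw [← hz] at hP; linarith) hF00
        rw [this] at hW
        have : 0 ≤ T2 * (C2 * 2 * (C3 * CP)) * u * Ex (NP G) := by positivity
        linarith
      · have htd : ∀ a, (tens G F0 a).totalDegree ≤ K + (k + 1) := fun a =>
          (MvPolynomial.totalDegree_mul _ _).trans (add_le_add (hG _) (hF0d _))
        have hτs : 0 < Real.sqrt τ2 := Real.sqrt_pos.2 hτpos
        have a := H2 n ι F (κ × ι) (tens G F0) hF htd u (Real.sqrt T2) (Real.sqrt τ2) hu
          (Real.sqrt_nonneg _) hτs (Real.sq_sqrt hτ0)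
        rw [hTsq] at a
        refine a.trans (ENNReal.ofReal_le_ofReal ?_)
        have hW2 : Ex (NP (tens G F0)) ≤ C3 * (Ex (NP G) * (CP * τ2)) :=
          hW.trans (by gcongr)
        have hτT : τ2 ≤ T2 := by nlinarith
        have hsq : (Real.sqrt T2 / Real.sqrt τ2 + 1) * τ2 ≤ 2 * T2 := by
          have e : Real.sqrt T2 / Real.sqrt τ2 * τ2 = Real.sqrt T2 * Real.sqrt τ2 := by
            conv_lhs => rw [← Real.sq_sqrt hτ0, Real.sqrt_sq hτs.le]
            field_simp
          have e3 : Real.sqrt T2 * Real.sqrt τ2 ≤ Real.sqrt T2 * Real.sqrt T2 := by gcongr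
          rw [Real.mul_self_sqrt hT0] at e3
          rw [add_mul, e]; linarith
        calc C2 * (Real.sqrt T2 / Real.sqrt τ2 + 1) * u * Ex (NP (tens G F0))
            ≤ C2 * (Real.sqrt T2 / Real.sqrt τ2 + 1) * u * (C3 * (Ex (NP G) * (CP * τ2))) := by
              gcongr
          _ = C2 * u * C3 * Ex (NP G) * CP * ((Real.sqrt T2 / Real.sqrt τ2 + 1) * τ2) := by ring
          _ ≤ C2 * u * C3 * Ex (NP G) * CP * (2 * T2) := by gcongr
          _ = _ := by ring
    refine le_trans ?_ (fin (16 * (C2 * 2 * (C3 * CP))) (by linarith))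
    have h5 : mass A (NP G) ≤ ENNReal.ofReal (T2 * (C2 * 2 * (C3 * CP)) * u * Ex (NP G)) /
        ENNReal.ofReal (T2 / 16) := by
      rw [ENNReal.le_div_iff_mul_le (Or.inl (by simpa using by positivity)) (Or.inl (by simp)),
        mul_comm]
      exact hcmp.trans hup
    refine h5.trans (le_of_eq ?_)
    rw [← ENNReal.ofReal_div_of_pos (by positivity)]
    congr 1
    field_simp

end GaussPoly

/-! ### Estimate for standard Gaussian vectors -/

namespace GaussPoly
open Set

/-- The probability that a standard Gaussian variable is at least one in absolute value. -/
noncomputable def c0 : ℝ := (gaussianReal 0 1).real {w : ℝ | 1 ≤ w ^ 2}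

lemma c0_pos : 0 < c0 := by
  rw [c0, Measure.real, ENNReal.toReal_pos_iff]
  refine ⟨?_, measure_lt_top _ _⟩
  rw [pos_iff_ne_zero]
  intro h
  have h1 := gaussianReal_absolutelyContinuous' 0 (one_ne_zero) h
  have h2 : Icc (1 : ℝ) 2 ⊆ {w : ℝ | 1 ≤ w ^ 2} := fun w hw => by
    have := hw.1
    change 1 ≤ w ^ 2
    nlinarith
  have h3 := measure_mono_null h2 h1
  norm_num [Real.volume_Icc] at h3

/-- A centred Gaussian variable exceeds its standard deviation with probability `c0`. -/
lemma gaussian_large {S : ℝ} (hS : 0 < S) :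
    (gaussianReal 0 S.toNNReal).real {w : ℝ | S ≤ w ^ 2} = c0 := by
  have h := gaussianReal_map_const_mul (μ := 0) (v := 1) (Real.sqrt S)
  have e : (NNReal.mk (Real.sqrt S ^ 2) (sq_nonneg _) * 1 : NNReal) = S.toNNReal := by
    ext; simp [Real.sq_sqrt hS.le, hS.le]
  rw [mul_zero, e] at h
  rw [← h, measureReal_def, Measure.map_apply (by fun_prop)
    (measurableSet_le measurable_const (by fun_prop)), c0, measureReal_def]
  congr 2
  ext w
  simp only [mem_preimage, mem_ofPred_eq, mul_pow, Real.sq_sqrt hS.le]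
  constructor
  · intro hw
    by_contra hlt
    push Not at hlt
    nlinarith
  · intro hw
    nlinarith

/-- For a random direction `y`, the event that the directional derivative is at least `|∇g(x)|` in
absolute value has a probability that does not depend on `x` or `g`. -/
lemma dd_large {n : ℕ} (g : MvPolynomial (Fin n) ℝ) (x : Fin n → ℝ)
    (hx : 0 < MvPolynomial.eval x (gsq g)) :
    (gam n).real {y | MvPolynomial.eval x (gsq g) ≤ dd g (x, y) ^ 2} = c0 := by
  have e : MvPolynomial.eval x (gsq g) = ∑ j, MvPolynomial.eval x (MvPolynomial.pderiv j g) ^ 2 := by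
    simp [gsq]
  rw [← gaussian_large hx]
  have hm := map_linear fun j => MvPolynomial.eval x (MvPolynomial.pderiv j g)
  rw [← e] at hm
  rw [← hm]
  rw [measureReal_def, measureReal_def, Measure.map_apply
    (Finset.measurable_sum _ fun j _ => (measurable_pi_apply j).mul_const _)
    (measurableSet_le measurable_const (by fun_prop))]
  rfl

/-- The contribution to `E φ'(g)` of the points where the gradient is at least `δ`. Since the
probability in `dd_large` is a constant, it equals `1 / c0` times the same expectation over pairs
`(x, y)` with a directional derivative at least `|∇g(x)|`; on each circle `osc` applies. -/
lemma large_gradient (d : ℕ) : ∃ C : ℝ, 0 < C ∧ ∀ (n : ℕ) (g : MvPolynomial (Fin n) ℝ),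
    g.totalDegree ≤ d → ∀ (φ : ℝ → ℝ) (ε δ : ℝ), ContDiff ℝ 1 φ → 0 < δ → (∀ x, |φ x| ≤ ε) →
    (∀ x, |deriv φ x| ≤ 1) →
    |∫ x in {x | δ ^ 2 ≤ MvPolynomial.eval x (gsq g)},
      deriv φ (MvPolynomial.eval x g) ∂(gam n)| ≤ C * (ε / δ) := by
  obtain ⟨C, hC, H⟩ := osc d (2 * d) (2 * d) (2 * (2 * d)) (2 * d) (2 * (2 * d + 1))
  have hpi := Real.pi_pos
  have hc0 := c0_pos
  refine ⟨C / (c0 * (Real.pi / 2)), by positivity, fun n g hg φ ε δ hφ hδ hε hφ1 => ?_⟩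
  set A := {x | δ ^ 2 ≤ MvPolynomial.eval x (gsq g)} with hA
  have hAm : MeasurableSet A := measurableSet_le measurable_const (measurable_eval _)
  set E : Set ((Fin n → ℝ) × (Fin n → ℝ)) := {z | δ ^ 2 ≤ MvPolynomial.eval z.1 (gsq g) ∧
    MvPolynomial.eval z.1 (gsq g) ≤ dd g z ^ 2} with hE
  have hEm : MeasurableSet E :=
    (measurableSet_le measurable_const ((measurable_eval _).comp measurable_fst)).inter
      (measurableSet_le ((measurable_eval _).comp measurable_fst) ((measurable_dd _).pow_const 2))
  have hφm : Measurable (deriv φ) := (hφ.continuous_deriv le_rfl).measurable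
  set h : (Fin n → ℝ) × (Fin n → ℝ) → ℝ :=
    E.indicator (fun z => deriv φ (MvPolynomial.eval z.1 g)) with hh
  have hm : Measurable h :=
    (hφm.comp ((measurable_eval _).comp measurable_fst)).indicator hEm
  have hb : ∀ z, |h z| ≤ 1 := fun z => by
    by_cases hz : z ∈ E
    · rw [hh, indicator_of_mem hz]; exact hφ1 _
    · rw [hh, indicator_of_notMem hz]; simp
  have hInt : Integrable h ((gam n).prod (gam n)) :=
    Integrable.of_bound hm.aestronglyMeasurable 1 (Filter.Eventually.of_forall hb)
  -- for `x ∈ A` the directions `y` with `(x, y) ∈ E` have probability `c0`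
  have h1 : ∫ z, h z ∂((gam n).prod (gam n)) =
      c0 * ∫ x in A, deriv φ (MvPolynomial.eval x g) ∂(gam n) := by
    rw [integral_prod _ hInt, ← integral_const_mul, ← integral_indicator hAm]
    refine integral_congr_ae (Filter.Eventually.of_forall fun x => ?_)
    simp only
    by_cases hx : x ∈ A
    · rw [indicator_of_mem hx]
      have hx1 : δ ^ 2 ≤ MvPolynomial.eval x (gsq g) := hx
      have hpos : 0 < MvPolynomial.eval x (gsq g) := lt_of_lt_of_le (by positivity) hx1
      rw [← dd_large g x hpos]
      set B := {y | MvPolynomial.eval x (gsq g) ≤ dd g (x, y) ^ 2} with hB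
      have hBm : MeasurableSet B := measurableSet_le measurable_const
        (((measurable_dd _).comp measurable_prodMk_left).pow_const 2)
      have e : (fun y => h (x, y)) =
          B.indicator (fun _ => deriv φ (MvPolynomial.eval x g)) := by
        ext y
        by_cases hy : y ∈ B
        · rw [indicator_of_mem hy, hh, indicator_of_mem]
          exact ⟨hx1, hy⟩
        · rw [indicator_of_notMem hy, hh, indicator_of_notMem]
          exact fun h => hy h.2
      rw [e, integral_indicator hBm, setIntegral_const, smul_eq_mul]
    · rw [indicator_of_notMem hx]
      have e : (fun y => h (x, y)) = fun _ => 0 := by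
        ext y
        rw [hh, indicator_of_notMem]
        exact fun h => hx h.1
      rw [e]; simp
  have hdeg : (gsq g).totalDegree ≤ 2 * d :=
    MvPolynomial.totalDegree_finsetSum_le fun j _ =>
      (MvPolynomial.totalDegree_pow _ _).trans (Nat.mul_le_mul_left 2
        ((totalDegree_pderiv_le hg j).trans (Nat.sub_le _ _)))
  have h2 : ∀ z : (Fin n → ℝ) × (Fin n → ℝ),
      |∫ t in (0 : ℝ)..(Real.pi / 2), h (rot t z)| ≤ C * (ε / δ) := by
    intro z
    have hder : ∀ t, HasDerivAt (fun t => MvPolynomial.eval (cx t z) g) (dd g (rot t z)) t :=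
      hasDerivAt_circle g z
    have hTq := tr_circle hg z
    have hTN := tr_circle hdeg z
    have hTd : Tr (2 * d) (2 * (2 * d + 1)) (fun t => dd g (rot t z) ^ 2) :=
      (hTq.deriv hder).pow 2
    have hcN : Continuous fun t => MvPolynomial.eval (cx t z) (gsq g) :=
      (contDiff_circle (gsq g) z 0).continuous
    have hcd : Continuous fun t => dd g (rot t z) := by
      have := (contDiff_circle g z 1).continuous_deriv le_rfl
      rwa [show deriv (fun t => MvPolynomial.eval (cx t z) g) = fun t => dd g (rot t z) from
        funext fun t => (hder t).deriv] at this
    have ha : Tr (2 * d) (2 * (2 * d))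
        (fun t => MvPolynomial.eval (cx t z) (gsq g) + -δ ^ 2) := hTN.add (Tr.const _ _)
    have hbb : Tr (2 * d) (2 * (2 * d + 1))
        (fun t => dd g (rot t z) ^ 2 + -1 * MvPolynomial.eval (cx t z) (gsq g)) :=
      hTd.add ((hTN.const_mul (-1)).mono (by omega))
    have := H (fun t => MvPolynomial.eval (cx t z) g) _ _ φ ε δ hTq ha hbb
      (contDiff_circle g z 2) (hcN.add continuous_const)
      ((hcd.pow 2).add (continuous_const.mul hcN)) hφ hδ hε (fun t _ h1 h2 => by
        rw [(hder t).deriv]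
        have h3 : δ ^ 2 ≤ dd g (rot t z) ^ 2 := by linarith
        have h4 := sq_le_sq.1 h3
        rwa [abs_of_pos hδ] at h4)
    convert this using 4 with t
    by_cases hz : rot t z ∈ E
    · rw [hh, indicator_of_mem hz, indicator_of_mem]
      · rfl
      · have h3 : δ ^ 2 ≤ MvPolynomial.eval (cx t z) (gsq g) := hz.1
        have h4 : MvPolynomial.eval (cx t z) (gsq g) ≤ dd g (rot t z) ^ 2 := hz.2
        constructor <;> linarith
    · rw [hh, indicator_of_notMem hz, indicator_of_notMem]
      rintro ⟨h3, h4⟩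
      apply hz
      refine ⟨?_, ?_⟩
      · change δ ^ 2 ≤ MvPolynomial.eval (cx t z) (gsq g); linarith
      · change MvPolynomial.eval (cx t z) (gsq g) ≤ dd g (rot t z) ^ 2; linarith
  have h3 : |Real.pi / 2 * ∫ z, h z ∂((gam n).prod (gam n))| ≤ C * (ε / δ) := by
    rw [integral_rot_average hm hb]
    have := norm_integral_le_of_norm_le_const (μ := (gam n).prod (gam n))
      (f := fun z => ∫ t in (0 : ℝ)..(Real.pi / 2), h (rot t z)) (Filter.Eventually.of_forall h2)
    simpa using this
  rw [h1, ← mul_assoc, abs_mul, abs_of_pos (by positivity)] at h3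
  rw [div_mul_eq_mul_div, le_div_iff₀ (by positivity)]
  linarith

/-- The main estimate for polynomials in independent standard Gaussian variables, in terms of
`τ² = E|∇g|²`. -/
lemma main_gam (d : ℕ) (hd : 1 ≤ d) : ∃ C : ℝ, 0 < C ∧ ∀ (n : ℕ) (g : MvPolynomial (Fin n) ℝ),
    g.totalDegree ≤ d → ∀ τ : ℝ, 0 < τ → τ ^ 2 = Ex (gsq g) →
    ∀ (φ : ℝ → ℝ) (ε : ℝ), ContDiff ℝ 1 φ → 0 < ε → (∀ x, |φ x| ≤ ε) →
    (∀ x, |deriv φ x| ≤ 1) →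
    |∫ x, deriv φ (MvPolynomial.eval x g) ∂(gam n)| ≤ C * (ε / τ) ^ ((1 : ℝ) / d) := by
  obtain ⟨C1, hC1, H1⟩ := large_gradient d
  obtain ⟨C2, hC2, H2⟩ := small_ball (d - 1) 0
  refine ⟨C1 + C2, by positivity, fun n g hg τ hτ hτ2 φ ε hφ hε hφε hφ1 => ?_⟩
  set u : ℝ := (ε / τ) ^ ((1 : ℝ) / d) with hu
  have hu0 : 0 < u := by positivity
  have hud : u ^ d = ε / τ := by
    rw [hu, ← Real.rpow_natCast, ← Real.rpow_mul (by positivity), one_div,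
      inv_mul_cancel₀ (by positivity), Real.rpow_one]
  set δ := τ * u ^ (d - 1) with hδ
  have hδ0 : 0 < δ := by positivity
  have hεδ : ε / δ = u := by
    have : u ^ d = u ^ (d - 1) * u := by rw [← pow_succ, Nat.sub_add_cancel hd]
    rw [hδ, div_eq_iff (by positivity)]
    have e : ε = τ * u ^ d := by rw [hud]; field_simp
    rw [e, this]; ring
  have a1 := H1 n g hg φ ε δ hφ hδ0 hφε hφ1
  rw [hεδ] at a1
  have hgr : NP (grad fun _ : Unit => g) = gsq g := by rw [NP_grad]; simp
  have a2 := H2 n (Unit × Fin n) (grad fun _ : Unit => g) Unit (fun _ => 1)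
    (totalDegree_grad fun _ => hg) (fun _ => by simp) u hu0
  have hN1 : NP (fun _ : Unit => (1 : MvPolynomial (Fin n) ℝ)) = 1 := by simp [NP]
  have hE1 : Ex (1 : MvPolynomial (Fin n) ℝ) = 1 := by simp [Ex]
  rw [hgr, hN1, hE1, ← hτ2, mul_one, show τ ^ 2 * u ^ (2 * (d - 1)) = δ ^ 2 by rw [hδ]; ring,
    mass] at a2
  simp only [map_one, ENNReal.ofReal_one, lintegral_const, one_mul,
    Measure.restrict_apply_univ] at a2
  set A := {x | δ ^ 2 ≤ MvPolynomial.eval x (gsq g)} with hA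
  have hAm : MeasurableSet A := measurableSet_le measurable_const (measurable_eval _)
  have hAc : {x | MvPolynomial.eval x (gsq g) < δ ^ 2} = Aᶜ := by
    ext x; simp [hA]
  rw [hAc] at a2
  have a3 : (gam n).real Aᶜ ≤ C2 * u := ENNReal.toReal_le_of_le_ofReal (by positivity) a2
  have hm : Measurable fun x => deriv φ (MvPolynomial.eval x g) :=
    (hφ.continuous_deriv le_rfl).measurable.comp (measurable_eval g)
  have hInt : Integrable (fun x => deriv φ (MvPolynomial.eval x g)) (gam n) :=
    Integrable.of_bound hm.aestronglyMeasurable 1 (Filter.Eventually.of_forall fun x => hφ1 _)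
  rw [← integral_add_compl hAm hInt]
  have a4 : |∫ x in Aᶜ, deriv φ (MvPolynomial.eval x g) ∂(gam n)| ≤ C2 * u := by
    have := norm_setIntegral_le_of_norm_le_const (μ := gam n) (s := Aᶜ) (C := 1)
      (f := fun x => deriv φ (MvPolynomial.eval x g)) (measure_lt_top _ _) (fun x _ => hφ1 _)
    rw [one_mul] at this
    exact this.trans a3
  calc _ ≤ _ := abs_add_le _ _
    _ ≤ C1 * u + C2 * u := add_le_add a1 a4
    _ = _ := by ring

end GaussPoly

/-! ### Densities and affine substitutions -/

namespace GaussPoly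
open Set

/-- The bound in `H` makes `ν` absolutely continuous: for a compact null set `K`, a continuous
function with values in `[0, 1]`, equal to `1` on `K` and with integral at most `ε`, has a primitive
that is an admissible `φ`, whence `ν K ≤ D ε ^ α` for every `ε`. -/
lemma absolutelyContinuous_of_bound {ν : Measure ℝ} [IsProbabilityMeasure ν] {D α : ℝ}
    (hα : 0 < α)
    (H : ∀ (φ : ℝ → ℝ) (ε : ℝ), ContDiff ℝ 1 φ → 0 < ε → (∀ x, |φ x| ≤ ε) →
      (∀ x, |deriv φ x| ≤ 1) → |∫ s, deriv φ s ∂ν| ≤ D * ε ^ α) : ν ≪ volume := by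
  refine Measure.AbsolutelyContinuous.mk fun s hs h0 => ?_
  rw [hs.measure_eq_iSup_isCompact]
  simp only [ENNReal.iSup_eq_zero]
  intro K hKs hK
  have hK0 : volume K = 0 := measure_mono_null hKs h0
  have key : ∀ ε : ℝ, 0 < ε → ν.real K ≤ D * ε ^ α := by
    intro ε hε
    obtain ⟨U, hKU, hU, hUv⟩ := K.exists_isOpen_lt_of_lt (μ := volume) (ENNReal.ofReal ε)
      (by rw [hK0]; simpa using hε)
    obtain ⟨ψ, h1, h2, hc, h01⟩ := exists_continuous_one_zero_of_isCompact hK hU.isClosed_compl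
      (disjoint_compl_right_iff_subset.2 hKU)
    have hψi : Integrable ψ := ψ.continuous.integrable_of_hasCompactSupport hc
    have hψ0 : ∀ x, 0 ≤ ψ x := fun x => (h01 x).1
    have htot : ∫ x, ψ x ≤ ε := by
      calc ∫ x, ψ x ≤ ∫ x, U.indicator (fun _ => (1 : ℝ)) x := by
            refine integral_mono hψi
              ((integrable_indicator_iff hU.measurableSet).2
                (integrableOn_const (ne_top_of_lt hUv))) fun x => ?_
            by_cases hx : x ∈ U
            · rw [indicator_of_mem hx]; exact (h01 x).2
            · rw [indicator_of_notMem hx]; exact (h2 hx).le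
        _ = volume.real U := by rw [integral_indicator_const _ hU.measurableSet]; simp
        _ ≤ ε := ENNReal.toReal_le_of_le_ofReal hε.le hUv.le
    have hder : ∀ x, HasDerivAt (fun x => ∫ s in (0 : ℝ)..x, ψ s) (ψ x) x := fun x =>
      ψ.continuous.integral_hasStrictDerivAt 0 x |>.hasDerivAt
    have hd : deriv (fun x => ∫ s in (0 : ℝ)..x, ψ s) = ψ := funext fun x => (hder x).deriv
    have hC1 : ContDiff ℝ 1 (fun x => ∫ s in (0 : ℝ)..x, ψ s) := by
      rw [contDiff_one_iff_deriv, hd]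
      exact ⟨fun x => (hder x).differentiableAt, ψ.continuous⟩
    have hbd : ∀ x, |∫ s in (0 : ℝ)..x, ψ s| ≤ ε := fun x => by
      refine le_trans ?_ htot
      rw [← Real.norm_eq_abs, intervalIntegral.norm_intervalIntegral_eq,
        Real.norm_of_nonneg (integral_nonneg hψ0)]
      exact setIntegral_le_integral hψi (Filter.Eventually.of_forall hψ0)
    have := H _ ε hC1 hε hbd (fun x => by
      rw [hd, abs_of_nonneg (hψ0 x)]; exact (h01 x).2)
    rw [hd] at this
    refine le_trans ?_ ((le_abs_self _).trans this)
    calc ν.real K = ∫ x, K.indicator (fun _ => (1 : ℝ)) x ∂ν := by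
          rw [integral_indicator_const _ hK.measurableSet]; simp
      _ ≤ ∫ x, ψ x ∂ν := by
          refine integral_mono ((integrable_const _).indicator hK.measurableSet)
            (Integrable.of_bound ψ.continuous.aestronglyMeasurable 1
              (Filter.Eventually.of_forall fun x => ?_)) fun x => ?_
          · rw [Real.norm_of_nonneg (hψ0 x)]; exact (h01 x).2
          · by_cases hx : x ∈ K
            · rw [indicator_of_mem hx]; exact (h1 hx).ge
            · rw [indicator_of_notMem hx]; exact hψ0 x
  have hlim : Filter.Tendsto (fun ε : ℝ => D * ε ^ α) (nhdsWithin 0 (Ioi 0)) (nhds 0) := by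
    have : Filter.Tendsto (fun ε : ℝ => D * ε ^ α) (nhds 0) (nhds (D * 0 ^ α)) :=
      ((Real.continuous_rpow_const hα.le).const_mul D).tendsto 0 |>.trans (by rfl)
    rw [Real.zero_rpow hα.ne', mul_zero] at this
    exact this.mono_left nhdsWithin_le_nhds
  have : ν.real K ≤ 0 := ge_of_tendsto hlim (Filter.eventually_of_mem self_mem_nhdsWithin key)
  have h := le_antisymm this measureReal_nonneg
  exact (measureReal_eq_zero_iff).1 h

/-- The bound in `H` yields a density of `ν`, and the same bound for its modulus `sigmaMod`. -/
lemma exists_density {ν : Measure ℝ} [IsProbabilityMeasure ν] {D α : ℝ} (hD : 0 ≤ D)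
    (hα : 0 < α)
    (H : ∀ (φ : ℝ → ℝ) (ε : ℝ), ContDiff ℝ 1 φ → 0 < ε → (∀ x, |φ x| ≤ ε) →
      (∀ x, |deriv φ x| ≤ 1) → |∫ s, deriv φ s ∂ν| ≤ D * ε ^ α) :
    ∃ ρ : ℝ → ℝ, Integrable ρ ∧ ν = volume.withDensity (fun s => ENNReal.ofReal (ρ s)) ∧
      ∀ ε : ℝ, 0 < ε → sigmaMod ρ ε ≤ D * ε ^ α := by
  have hac := absolutelyContinuous_of_bound hα H
  refine ⟨fun x => (ν.rnDeriv volume x).toReal, Measure.integrable_toReal_rnDeriv, ?_, ?_⟩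
  · conv_lhs => rw [← Measure.withDensity_rnDeriv_eq ν volume hac]
    refine withDensity_congr_ae ?_
    filter_upwards [Measure.rnDeriv_lt_top ν volume] with x hx
    rw [ENNReal.ofReal_toReal hx.ne]
  · intro ε hε
    refine Real.sSup_le ?_ (by positivity)
    rintro r ⟨φ, hφ, -, hb, hb1, rfl⟩
    have e : ∫ s, deriv φ s * (ν.rnDeriv volume s).toReal = ∫ s, deriv φ s ∂ν := by
      rw [← integral_rnDeriv_smul hac]
      simp only [smul_eq_mul, mul_comm]
    rw [e]
    exact (le_abs_self _).trans (H φ ε (hφ.of_le (by exact_mod_cast le_top)) hε hb hb1)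

/-- An affine change of variables does not increase the degree. -/
lemma exists_affine_subst {n : ℕ} (L : (Fin n → ℝ) →ₗ[ℝ] (Fin n → ℝ)) (b : Fin n → ℝ)
    (g : MvPolynomial (Fin n) ℝ) : ∃ g' : MvPolynomial (Fin n) ℝ,
      g'.totalDegree ≤ g.totalDegree ∧
      ∀ x, MvPolynomial.eval x g' = MvPolynomial.eval (b + L x) g := by
  let f : Fin n → MvPolynomial (Fin n) ℝ := fun i => MvPolynomial.C (b i) +
    ∑ j, MvPolynomial.X j * MvPolynomial.C (L (Pi.single j 1) i)
  have hf : ∀ i, (f i).totalDegree ≤ 1 := fun i => by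
    refine (MvPolynomial.totalDegree_add _ _).trans (max_le (by simp) ?_)
    refine MvPolynomial.totalDegree_finsetSum_le fun j _ => ?_
    refine (MvPolynomial.totalDegree_mul _ _).trans ?_
    simp
  have hfe : ∀ x i, MvPolynomial.eval x (f i) = (b + L x) i := fun x i => by
    have : L x = ∑ j, x j • L (Pi.single j 1) := by
      conv_lhs => rw [pi_eq_sum_univ' x, map_sum]
      simp
    simp [f, this]
  refine ⟨MvPolynomial.eval₂ MvPolynomial.C f g, ?_, fun x => ?_⟩
  · rw [MvPolynomial.eval₂_eq]
    refine MvPolynomial.totalDegree_finsetSum_le fun m hm => ?_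
    refine (MvPolynomial.totalDegree_mul _ _).trans ?_
    rw [MvPolynomial.totalDegree_C, zero_add]
    refine (MvPolynomial.totalDegree_finsetProd _ _).trans ?_
    refine le_trans (Finset.sum_le_sum fun i _ => ?_) (MvPolynomial.le_totalDegree hm)
    exact (MvPolynomial.totalDegree_pow _ _).trans
      ((Nat.mul_le_mul_left _ (hf i)).trans (by simp))
  · rw [MvPolynomial.eval₂_eq, MvPolynomial.eval_eq (b + L x)]
    simp [hfe]

end GaussPoly

/-- Theorem: for every `d` there is `C(d) > 0` such that for every Gaussian random vector `X`
in `ℝⁿ` and every non-constant (as a random variable) polynomial `g` of total degree at most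
`d`, the density `ϱ_g` of `g(X)` satisfies
`σ(ϱ_g, ε) ≤ C(d) (𝔻g(X))^{-1/(2d)} ε^{1/d}` for all `ε > 0`. -/
theorem sigma_bound_gaussian_polynomial (d : ℕ) (hd : 1 ≤ d) :
    ∃ C : ℝ, 0 < C ∧
      ∀ (n : ℕ) (μ : Measure (Fin n → ℝ)), IsGaussianVec μ →
        ∀ g : MvPolynomial (Fin n) ℝ, g.totalDegree ≤ d →
          0 < variance (fun x => MvPolynomial.eval x g) μ →
          ∃ ρ : ℝ → ℝ, Integrable ρ ∧
            μ.map (fun x => MvPolynomial.eval x g)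
              = volume.withDensity (fun s => ENNReal.ofReal (ρ s)) ∧
            ∀ ε : ℝ, 0 < ε →
              sigmaMod ρ ε ≤
                C * (variance (fun x => MvPolynomial.eval x g) μ) ^ (-(1 : ℝ) / (2 * d)) *
                  ε ^ ((1 : ℝ) / d) := by
  obtain ⟨C1, hC1, H1⟩ := GaussPoly.main_gam d hd
  obtain ⟨CP, hCP, HP⟩ := GaussPoly.poincare_scalar d
  have hd0 : (0 : ℝ) < d := by exact_mod_cast hd
  refine ⟨C1 * CP ^ ((1 : ℝ) / (2 * d)), by positivity, ?_⟩
  rintro n μ ⟨L, b, rfl⟩ g hg hV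
  obtain ⟨g', hg', hev⟩ := GaussPoly.exists_affine_subst L b g
  have hd' : g'.totalDegree ≤ d := hg'.trans hg
  have hmL : Measurable fun x => b + L x :=
    (continuous_const.add L.continuous_of_finiteDimensional).measurable
  have hmap : ((stdGaussian n).map fun x => b + L x).map (fun x => MvPolynomial.eval x g) =
      (GaussPoly.gam n).map (fun x => MvPolynomial.eval x g') := by
    rw [Measure.map_map (GaussPoly.measurable_eval g) hmL]
    congr 1
    exact funext fun x => (hev x).symm
  have hvar : variance (fun x => MvPolynomial.eval x g) ((stdGaussian n).map fun x => b + L x) =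
      GaussPoly.Ex (g' ^ 2) - GaussPoly.Ex g' ^ 2 := by
    rw [variance_map (GaussPoly.measurable_eval g).aemeasurable hmL.aemeasurable]
    have e : (fun x => MvPolynomial.eval x g) ∘ (fun x => b + L x) =
        fun x => MvPolynomial.eval x g' := funext fun x => (hev x).symm
    rw [e]
    have := variance_eq_sub (GaussPoly.allLp_eval g' 2 (by simp))
    refine this.trans ?_
    simp [GaussPoly.Ex]
  rw [hmap]
  set V := variance (fun x => MvPolynomial.eval x g) ((stdGaussian n).map fun x => b + L x) with hVd
  have hVτ : V ≤ CP * GaussPoly.Ex (GaussPoly.gsq g') := by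
    rw [hvar]; exact HP n g' hd'
  have hτ2 : 0 < GaussPoly.Ex (GaussPoly.gsq g') := by
    by_contra h
    push Not at h
    nlinarith
  set τ := Real.sqrt (GaussPoly.Ex (GaussPoly.gsq g')) with hτ
  have hτ0 : 0 < τ := Real.sqrt_pos.2 hτ2
  have hτsq : τ ^ 2 = GaussPoly.Ex (GaussPoly.gsq g') := Real.sq_sqrt hτ2.le
  have hprob : IsProbabilityMeasure
      ((GaussPoly.gam n).map (fun x => MvPolynomial.eval x g')) :=
    Measure.isProbabilityMeasure_map (GaussPoly.measurable_eval g').aemeasurable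
  refine GaussPoly.exists_density (by positivity) (by positivity) fun φ ε hφ hε hb hb1 => ?_
  rw [integral_map (GaussPoly.measurable_eval g').aemeasurable
    (hφ.continuous_deriv le_rfl).aestronglyMeasurable]
  refine (H1 n g' hd' τ hτ0 hτsq φ ε hφ hε hb hb1).trans ?_
  -- `τ ^ (-1/d) ≤ CP ^ (1/(2d)) * V ^ (-1/(2d))`, because `V ≤ CP * τ ^ 2`
  have h1 : (1 / τ) ^ ((1 : ℝ) / d) = (1 / τ ^ 2) ^ ((1 : ℝ) / (2 * d)) := by
    rw [← one_div_pow, ← Real.rpow_natCast, ← Real.rpow_mul (by positivity)]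
    congr 1
    push_cast
    field_simp
  have h2 : (1 / τ ^ 2) ^ ((1 : ℝ) / (2 * d)) ≤ (CP * V⁻¹) ^ ((1 : ℝ) / (2 * d)) := by
    apply Real.rpow_le_rpow (by positivity) _ (by positivity)
    rw [← div_eq_mul_inv, div_le_div_iff₀ (by positivity) hV, hτsq]
    linarith
  have h3 : (CP * V⁻¹) ^ ((1 : ℝ) / (2 * d)) =
      CP ^ ((1 : ℝ) / (2 * d)) * V ^ (-(1 : ℝ) / (2 * d)) := by
    rw [Real.mul_rpow hCP.le (by positivity), Real.inv_rpow hV.le, ← Real.rpow_neg hV.le, neg_div]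
  have h4 : (ε / τ) ^ ((1 : ℝ) / d) = (1 / τ) ^ ((1 : ℝ) / d) * ε ^ ((1 : ℝ) / d) := by
    rw [← Real.mul_rpow (by positivity) hε.le]
    congr 1
    ring
  rw [h4, h1, mul_assoc C1, ← h3, mul_assoc C1]
  gcongr
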